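/- There exist constants k₀ ≥ 1, δ₀ > 0 and C > 0 with the following property. Let ν ∈ (0,1], k ∈ ℤ with |k| ≥ 1, λ ∈ ℝ, ε ∈ [0, δ₀), and set L = (|k|/ν)^{1/3}. Assume L ≥ 6|k| or L ≥ |k| ≥ k₀. Let φ₁, φ₂ : [−1,1] → ℂ be four times continuously differentiable with: φ₁(±1) = 0, φ₁'(1) = 1, φ₁'(−1) = 0; φ₂(±1) = 0, φ₂'(−1) = 1, φ₂'(1) = 0; and, with w_i = φ_i'' − k²φ_i (i = 1,2), −ν(w_i'' − k²w_i) + ik(y−λ)w_i − ε·ν^{1/3}|k|^{2/3}w_i = 0 on [−1,1]. Then ‖w₁‖_{L∞} ≤ C·ν^{−1/2}(1+|k|·|λ−1|)^{1/2}, ‖w₂‖_{L∞} ≤ C·ν^{−1/2}(1+|k|·|λ+1|)^{1/2}, and ‖w₁‖_{L¹} + ‖w₂‖_{L¹} ≤ C. -/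

import Mathlib

/-- The `L¹` norm of a function on the interval `[-1,1]`. -/
noncomputable def nL1 (f : ℝ → ℂ) : ℝ :=
  ∫ y in Set.Icc (-1:ℝ) 1, ‖f y‖

/-- The `L^∞` norm of a function on the interval `[-1,1]`. -/
noncomputable def nLinf (f : ℝ → ℂ) : ℝ :=
  ⨆ y : ↥(Set.Icc (-1:ℝ) 1), ‖f (y : ℝ)‖

/-! After rescaling, the vorticity of a solution solves the Airy equation `W'' = (i s + c) W`. Let
`G` be a primitive of a solution `W` on the rescaled channel. The logarithmic derivatives `W' / W`
and `W / G` obey Riccati equations, and discs around `√(i s)`, suitably deformed near the turning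
point `s = 0`, are invariant for these from left to right. Hence some solution has a primitive
that grows towards the right endpoint at rate at least `1 / 5` throughout: a boundary layer with
explicit pointwise bounds. Reflection and conjugation give the layer at the left endpoint.

Integrating the vorticity against `exp (± k y)` turns the boundary data of the stream function
into two exponential moments. The two layers have a uniformly invertible `2 × 2` matrix of such
moments, so each vorticity is a combination of the layers with controlled coefficients, and the
bounds for the layers carry over. -/

namespace OrrSommerfeld

open Complex Set
open scoped ComplexConjugate

section Comparison

theorem nonpos_of_deriv_le_mul_self {f f' : ℝ → ℝ} {a b K : ℝ}
    (hf : ∀ x ∈ Icc a b, HasDerivAt f (f' x) x) (ha : f a ≤ 0)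
    (hK : ∀ x ∈ Icc a b, 0 < f x → f' x ≤ K * f x) {x : ℝ} (hx : x ∈ Icc a b) : f x ≤ 0 := by
  have below_exp (δ : ℝ) (hδ : 0 < δ) : f x ≤ δ * Real.exp ((K + 1) * (x - a)) := by
    have hB (y : ℝ) : HasDerivAt (fun y ↦ δ * Real.exp ((K + 1) * (y - a)))
        (δ * (Real.exp ((K + 1) * (y - a)) * (K + 1))) y := by
      have := ((hasDerivAt_id y).sub_const a).const_mul (K + 1)
      exact ((by simpa using this : HasDerivAt _ (K + 1) y).exp).const_mul δ
    refine image_le_of_deriv_right_lt_deriv_boundary'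
      (fun y hy ↦ (hf y hy).continuousAt.continuousWithinAt)
      (fun y hy ↦ (hf y ⟨hy.1, hy.2.le⟩).hasDerivWithinAt)
      (by simpa using ha.trans hδ.le)
      (fun y _ ↦ (hB y).continuousAt.continuousWithinAt)
      (fun y _ ↦ (hB y).hasDerivWithinAt) (fun y hy hfy ↦ ?_) hx
    have hpos : 0 < δ * Real.exp ((K + 1) * (y - a)) := by positivity
    have := hK y ⟨hy.1, hy.2.le⟩ (hfy ▸ hpos)
    rw [hfy] at this
    linarith
  refine le_of_forall_pos_le_add fun δ hδ ↦ ?_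
  have := below_exp (δ / Real.exp ((K + 1) * (x - a))) (by positivity)
  rwa [div_mul_cancel₀ _ (Real.exp_pos _).ne', ← zero_add δ] at this

theorem hasDerivAt_norm_sq {f : ℝ → ℂ} {f' : ℂ} {x : ℝ} (h : HasDerivAt f f' x) :
    HasDerivAt (fun x ↦ ‖f x‖ ^ 2) (2 * (f' * conj (f x)).re) x :=
  h.norm_sq.congr_deriv (by rw [Complex.inner])

theorem re_mul_conj_le (z w : ℂ) : (z * conj w).re ≤ ‖z‖ * ‖w‖ := by
  simpa using re_le_norm (z * conj w)

theorem neg_le_re_mul_conj (z w : ℂ) : -(‖z‖ * ‖w‖) ≤ (z * conj w).re := by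
  have := re_mul_conj_le (-z) w
  rw [neg_mul, neg_re, norm_neg] at this
  linarith

theorem re_mul_mul_conj_self (z w : ℂ) : (z * w * conj w).re = z.re * ‖w‖ ^ 2 := by
  rw [mul_assoc, mul_conj, re_mul_ofReal, normSq_eq_norm_sq]

theorem sub_add_le_mul_add_of_abs_le {ρ' α α' r z w K : ℝ} (hr : 0 < r) (hz : 0 ≤ z) (hw : 0 ≤ w)
    (hK : |ρ'| / r + |α| + |α'| ≤ K) : ρ' * w - α * z + α' * (r * w) ≤ K * (z + r * w) := by
  have hρ' : ρ' * w ≤ |ρ'| / r * (r * w) := by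
    rw [← mul_assoc, div_mul_cancel₀ _ hr.ne']
    exact mul_le_mul_of_nonneg_right (le_abs_self _) hw
  have hrw : 0 ≤ r * w := by positivity
  have hq : 0 ≤ |ρ'| / r := by positivity
  nlinarith [mul_le_mul_of_nonneg_right hK (add_nonneg hz hrw),
    mul_le_mul_of_nonneg_right (neg_abs_le α) hz, mul_le_mul_of_nonneg_right (le_abs_self α') hrw,
    mul_nonneg (abs_nonneg α') hz, mul_nonneg (abs_nonneg α) hrw, mul_nonneg hq hz]

-- The condition on `β` says that `β - (α + α') r + r²`, the rate at which the ratio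
-- `r = ‖Z‖ / ‖W‖` grows, is at most `ρ'` when `r = ρ`.
theorem norm_le_mul_norm_of_deriv {Z Z' W W' : ℝ → ℂ} {ρ ρ' α α' β : ℝ → ℝ} {a b : ℝ}
    (hZ : ∀ s ∈ Icc a b, HasDerivAt Z (Z' s) s) (hW : ∀ s ∈ Icc a b, HasDerivAt W (W' s) s)
    (hρ : ∀ s ∈ Icc a b, HasDerivAt ρ (ρ' s) s) (hρ_pos : ∀ s ∈ Icc a b, 0 < ρ s)
    (hρ' : ContinuousOn ρ' (Icc a b)) (hα : ContinuousOn α (Icc a b))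
    (hα' : ContinuousOn α' (Icc a b))
    (hZ_le : ∀ s ∈ Icc a b,
      (Z' s * conj (Z s)).re ≤ ‖Z s‖ * (β s * ‖W s‖ - α s * ‖Z s‖))
    (hW_ge : ∀ s ∈ Icc a b, ‖W s‖ * (α' s * ‖W s‖ - ‖Z s‖) ≤ (W' s * conj (W s)).re)
    (hβ : ∀ s ∈ Icc a b, β s ≤ ρ' s + (α s + α' s) * ρ s - ρ s ^ 2)
    (ha : ‖Z a‖ ≤ ρ a * ‖W a‖) {s : ℝ} (hs : s ∈ Icc a b) : ‖Z s‖ ≤ ρ s * ‖W s‖ := by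
  have hρ_cont : ContinuousOn ρ (Icc a b) := fun s hs ↦ (hρ s hs).continuousAt.continuousWithinAt
  obtain ⟨K, hK⟩ := isCompact_Icc.exists_bound_of_continuousOn
    (f := fun s ↦ |ρ' s| / ρ s + |α s| + |α' s|)
    (((hρ'.abs.div hρ_cont fun s hs ↦ (hρ_pos s hs).ne').add hα.abs).add hα'.abs)
  have excess := nonpos_of_deriv_le_mul_self (K := 2 * K)
    (f := fun s ↦ ‖Z s‖ ^ 2 - ρ s ^ 2 * ‖W s‖ ^ 2)
    (fun t ht ↦ (hasDerivAt_norm_sq (hZ t ht)).sub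
      (((hρ t ht).pow 2).mul (hasDerivAt_norm_sq (hW t ht))))
    (by rw [← mul_pow]; exact sub_nonpos.2 (pow_le_pow_left₀ (norm_nonneg _) ha 2))
    (fun t ht hpos ↦ ?_) hs
  · rw [← mul_pow, sub_nonpos] at excess
    exact le_of_sq_le_sq excess (mul_nonneg (hρ_pos s hs).le (norm_nonneg _))
  have hr := hρ_pos t ht
  have hz := norm_nonneg (Z t)
  have hw := norm_nonneg (W t)
  have gap : 0 < ‖Z t‖ - ρ t * ‖W t‖ := by
    rw [← mul_pow, sub_pos] at hpos
    exact sub_pos.2 (lt_of_pow_lt_pow_left₀ 2 hz hpos)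
  have rate := sub_add_le_mul_add_of_abs_le hr hz hw ((le_abs_self _).trans (hK t ht))
  have := mul_le_mul_of_nonneg_left rate gap.le
  have := mul_le_mul_of_nonneg_left (hW_ge t ht) (sq_nonneg (ρ t))
  have := mul_le_mul_of_nonneg_left (hβ t ht) (mul_nonneg hz hw)
  have := hZ_le t ht
  simp only [Pi.pow_apply] at *
  push_cast
  nlinarith

end Comparison

section Tube

/-- `W` solves the complex Airy equation `W'' = (i s + c) W` on `[a, b]`, recorded together with its
derivative `V` and a primitive `G`. -/
structure AiryTriple (c a b : ℝ) (G W V : ℝ → ℂ) : Prop where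
  primitive : ∀ s ∈ Icc a b, HasDerivAt G (W s) s
  deriv : ∀ s ∈ Icc a b, HasDerivAt W (V s) s
  airy : ∀ s ∈ Icc a b, HasDerivAt V ((I * s + c) * W s) s

theorem AiryTriple.mono {c a b a' b' : ℝ} {G W V : ℝ → ℂ} (h : AiryTriple c a b G W V)
    (ha : a ≤ a') (hb : b' ≤ b) : AiryTriple c a' b' G W V :=
  have hsub := Icc_subset_Icc ha hb
  ⟨fun s hs ↦ h.primitive s (hsub hs), fun s hs ↦ h.deriv s (hsub hs),
    fun s hs ↦ h.airy s (hsub hs)⟩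

/-- A set of possible values of `(G, W, V)`: the logarithmic derivatives `V / W` and `W / G` lie in
discs with centres `q`, `p` and radii `ρ`, `σ`. -/
structure Tube where
  q : ℂ
  p : ℂ
  ρ : ℝ
  σ : ℝ

/-- Membership in a tube, in a form without quotients because `W` and `G` may vanish. -/
structure Tube.Mem (t : Tube) (G W V : ℂ) : Prop where
  deriv : ‖V - t.q * W‖ ≤ t.ρ * ‖W‖
  primitive : ‖W - t.p * G‖ ≤ t.σ * ‖G‖

/-- The discs of `t` are contained in those of `t'`. -/
structure Tube.Within (t t' : Tube) : Prop where
  q : ‖t.q - t'.q‖ + t.ρ ≤ t'.ρ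
  p : ‖t.p - t'.p‖ + t.σ ≤ t'.σ

theorem Tube.Within.refl (t : Tube) : t.Within t := ⟨by simp, by simp⟩

theorem Tube.Within.trans {t t' t'' : Tube} (h : t.Within t') (h' : t'.Within t'') :
    t.Within t'' where
  q := by linarith [norm_sub_le_norm_sub_add_norm_sub t.q t'.q t''.q, h.q, h'.q]
  p := by linarith [norm_sub_le_norm_sub_add_norm_sub t.p t'.p t''.p, h.p, h'.p]

theorem Tube.Mem.mono {t t' : Tube} {G W V : ℂ} (h : t.Mem G W V) (ht : t.Within t') :
    t'.Mem G W V := by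
  have enlarge {x y z z' : ℂ} {r r' : ℝ} (h : ‖x - z * y‖ ≤ r * ‖y‖) (hr : ‖z - z'‖ + r ≤ r') :
      ‖x - z' * y‖ ≤ r' * ‖y‖ := calc
    ‖x - z' * y‖ = ‖(z - z') * y + (x - z * y)‖ := by ring_nf
    _ ≤ ‖z - z'‖ * ‖y‖ + r * ‖y‖ := (norm_add_le _ _).trans (by rw [norm_mul]; gcongr)
    _ ≤ r' * ‖y‖ := by rw [← add_mul]; gcongr
  exact ⟨enlarge h.deriv ht.q, enlarge h.primitive ht.p⟩

/-- On `S`, no Airy triple leaves the moving tube `t` as `s` increases. -/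
def Traps (c : ℝ) (t : ℝ → Tube) (S : Set ℝ) : Prop :=
  ∀ ⦃a⦄, a ∈ S → ∀ ⦃b⦄, b ∈ S → a ≤ b → ∀ G W V : ℝ → ℂ, AiryTriple c a b G W V →
    (t a).Mem (G a) (W a) (V a) → (t b).Mem (G b) (W b) (V b)

open Classical in
theorem Traps.glue {c m : ℝ} {t₁ t₂ : ℝ → Tube} {S₁ S₂ : Set ℝ} (h₁ : Traps c t₁ S₁)
    (h₂ : Traps c t₂ S₂) (hm₁ : IsGreatest S₁ m) (hm₂ : IsLeast S₂ m)
    (hm : (t₁ m).Within (t₂ m)) :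
    Traps c (fun s ↦ if s ∈ S₂ then t₂ s else t₁ s) (S₁ ∪ S₂) := by
  intro a ha b hb hab G W V h hMem
  by_cases ha₂ : a ∈ S₂ <;> by_cases hb₂ : b ∈ S₂ <;>
    simp only [ha₂, hb₂, if_true, if_false] at hMem ⊢
  · exact h₂ ha₂ hb₂ hab G W V h hMem
  · have hb₁ := hb.resolve_right hb₂
    have : a = b := hab.antisymm ((hm₁.2 hb₁).trans (hm₂.2 ha₂))
    exact absurd (this ▸ ha₂) hb₂
  · have ha₁ := ha.resolve_right ha₂
    have ham := hm₁.2 ha₁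
    have hmb := hm₂.2 hb₂
    exact h₂ hm₂.1 hb₂ hmb G W V (h.mono ham le_rfl)
      ((h₁ ha₁ hm₁.1 ham G W V (h.mono le_rfl hmb) hMem).mono hm)
  · exact h₁ (ha.resolve_right ha₂) (hb.resolve_right hb₂) hab G W V h hMem

theorem norm_sub_center_le {q q' : ℝ → ℂ} {ρ ρ' : ℝ → ℝ} {c a b : ℝ} {G W V : ℝ → ℂ}
    (h : AiryTriple c a b G W V) (hq : ∀ s ∈ Icc a b, HasDerivAt q (q' s) s)
    (hρ : ∀ s ∈ Icc a b, HasDerivAt ρ (ρ' s) s) (hρ_pos : ∀ s ∈ Icc a b, 0 < ρ s)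
    (hρ' : ContinuousOn ρ' (Icc a b))
    (hres : ∀ s ∈ Icc a b, ‖I * s + c - q s ^ 2 - q' s‖ ≤ ρ' s + 2 * (q s).re * ρ s - ρ s ^ 2)
    (ha : ‖V a - q a * W a‖ ≤ ρ a * ‖W a‖) {s : ℝ} (hs : s ∈ Icc a b) :
    ‖V s - q s * W s‖ ≤ ρ s * ‖W s‖ := by
  have hq_re : ContinuousOn (fun s ↦ (q s).re) (Icc a b) := fun s hs ↦
    (continuous_re.continuousAt.comp (hq s hs).continuousAt).continuousWithinAt
  refine norm_le_mul_norm_of_deriv (Z := fun s ↦ V s - q s * W s) (α := fun s ↦ (q s).re)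
    (α' := fun s ↦ (q s).re) (β := fun s ↦ ‖I * s + c - q s ^ 2 - q' s‖)
    (Z' := fun s ↦ (I * s + c - q s ^ 2 - q' s) * W s - q s * (V s - q s * W s))
    (fun s hs ↦ ?_) h.deriv hρ hρ_pos hρ' hq_re hq_re (fun s _ ↦ ?_) (fun s _ ↦ ?_)
    (fun s hs ↦ (hres s hs).trans_eq (by ring)) ha hs
  · exact ((h.airy s hs).sub ((hq s hs).mul (h.deriv s hs))).congr_deriv (by ring)
  · have := re_mul_conj_le ((I * s + c - q s ^ 2 - q' s) * W s) (V s - q s * W s)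
    have := re_mul_mul_conj_self (q s) (V s - q s * W s)
    rw [norm_mul] at *
    rw [sub_mul, sub_re]
    linarith
  · have := neg_le_re_mul_conj (V s - q s * W s) (W s)
    have := re_mul_mul_conj_self (q s) (W s)
    rw [show V s = q s * W s + (V s - q s * W s) by ring, add_mul, add_re, add_sub_cancel_left]
    linarith

theorem norm_sub_primitive_center_le {q p p' : ℝ → ℂ} {ρ σ σ' : ℝ → ℝ} {c a b : ℝ} {G W V : ℝ → ℂ}
    (h : AiryTriple c a b G W V) (hq : ContinuousOn q (Icc a b)) (hρ : ContinuousOn ρ (Icc a b))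
    (hρ_nonneg : ∀ s ∈ Icc a b, 0 ≤ ρ s) (hp : ∀ s ∈ Icc a b, HasDerivAt p (p' s) s)
    (hσ : ∀ s ∈ Icc a b, HasDerivAt σ (σ' s) s) (hσ_pos : ∀ s ∈ Icc a b, 0 < σ s)
    (hσ' : ContinuousOn σ' (Icc a b))
    (hres : ∀ s ∈ Icc a b, ‖p s * (q s - p s) - p' s‖ + ρ s * (‖p s‖ + σ s) ≤
      σ' s + (2 * p s - q s).re * σ s - σ s ^ 2)
    (hV : ∀ s ∈ Icc a b, ‖V s - q s * W s‖ ≤ ρ s * ‖W s‖)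
    (ha : ‖W a - p a * G a‖ ≤ σ a * ‖G a‖) {s : ℝ} (hs : s ∈ Icc a b) :
    ‖W s - p s * G s‖ ≤ σ s * ‖G s‖ := by
  have hp_cont : ContinuousOn p (Icc a b) := fun s hs ↦ (hp s hs).continuousAt.continuousWithinAt
  refine norm_le_mul_norm_of_deriv (Z := fun s ↦ W s - p s * G s)
    (Z' := fun s ↦ (p s * (q s - p s) - p' s) * G s + (q s - p s) * (W s - p s * G s) +
      (V s - q s * W s))
    (α := fun s ↦ (p s - q s).re - ρ s) (α' := fun s ↦ (p s).re)
    (β := fun s ↦ ‖p s * (q s - p s) - p' s‖ + ρ s * ‖p s‖)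
    (fun s hs ↦ ?_) h.primitive hσ hσ_pos hσ'
    ((continuous_re.comp_continuousOn (hp_cont.sub hq)).sub hρ)
    (continuous_re.comp_continuousOn hp_cont) (fun s hs ↦ ?_) (fun s _ ↦ ?_) (fun s hs ↦ ?_) ha hs
  · exact ((h.deriv s hs).sub ((hp s hs).mul (h.primitive s hs))).congr_deriv (by ring)
  · set Y := W s - p s * G s with hY
    have hW : ‖W s‖ ≤ ‖p s‖ * ‖G s‖ + ‖Y‖ := by
      rw [← norm_mul]
      exact (norm_add_le _ _).trans_eq' (by rw [hY]; ring_nf)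
    have hX : ‖V s - q s * W s‖ * ‖Y‖ ≤ ρ s * (‖p s‖ * ‖G s‖ + ‖Y‖) * ‖Y‖ := by
      gcongr
      exact (hV s hs).trans (mul_le_mul_of_nonneg_left hW (hρ_nonneg s hs))
    have := re_mul_conj_le ((p s * (q s - p s) - p' s) * G s) Y
    have := re_mul_conj_le (V s - q s * W s) Y
    have := re_mul_mul_conj_self (q s - p s) Y
    rw [norm_mul] at *
    rw [add_mul, add_mul, add_re, add_re]
    simp only [sub_re] at *
    linarith
  · have := neg_le_re_mul_conj (W s - p s * G s) (G s)
    have := re_mul_mul_conj_self (p s) (G s)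
    rw [show W s = p s * G s + (W s - p s * G s) by ring, add_mul, add_re, add_sub_cancel_left]
    linarith
  · have := hres s hs
    simp only [sub_re, mul_re, re_ofNat, im_ofNat] at *
    linarith

theorem traps_of_deriv {q q' p p' : ℝ → ℂ} {ρ ρ' σ σ' : ℝ → ℝ} {c : ℝ} {S : Set ℝ}
    (hS : S.OrdConnected) (hq : ∀ s ∈ S, HasDerivAt q (q' s) s)
    (hp : ∀ s ∈ S, HasDerivAt p (p' s) s)
    (hρ : ∀ s ∈ S, HasDerivAt ρ (ρ' s) s) (hσ : ∀ s ∈ S, HasDerivAt σ (σ' s) s)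
    (hρ_pos : ∀ s ∈ S, 0 < ρ s) (hσ_pos : ∀ s ∈ S, 0 < σ s)
    (hρ' : ContinuousOn ρ' S) (hσ' : ContinuousOn σ' S)
    (hq_res : ∀ s ∈ S, ‖I * s + c - q s ^ 2 - q' s‖ ≤ ρ' s + 2 * (q s).re * ρ s - ρ s ^ 2)
    (hp_res : ∀ s ∈ S, ‖p s * (q s - p s) - p' s‖ + ρ s * (‖p s‖ + σ s) ≤
      σ' s + (2 * p s - q s).re * σ s - σ s ^ 2) :
    Traps c (fun s ↦ ⟨q s, p s, ρ s, σ s⟩) S := by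
  intro a ha b hb hab G W V h hMem
  have hsub : Icc a b ⊆ S := hS.out ha hb
  have hV (s : ℝ) (hs : s ∈ Icc a b) : ‖V s - q s * W s‖ ≤ ρ s * ‖W s‖ :=
    norm_sub_center_le h (fun s hs ↦ hq s (hsub hs)) (fun s hs ↦ hρ s (hsub hs))
      (fun s hs ↦ hρ_pos s (hsub hs)) (hρ'.mono hsub) (fun s hs ↦ hq_res s (hsub hs)) hMem.deriv hs
  refine ⟨hV b (right_mem_Icc.2 hab), norm_sub_primitive_center_le h ?_ ?_
    (fun s hs ↦ (hρ_pos s (hsub hs)).le) (fun s hs ↦ hp s (hsub hs)) (fun s hs ↦ hσ s (hsub hs))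
    (fun s hs ↦ hσ_pos s (hsub hs)) (hσ'.mono hsub) (fun s hs ↦ hp_res s (hsub hs)) hV
    hMem.primitive (right_mem_Icc.2 hab)⟩
  · exact fun s hs ↦ (hq s (hsub hs)).continuousAt.continuousWithinAt
  · exact fun s hs ↦ (hρ s (hsub hs)).continuousAt.continuousWithinAt

end Tube

section OuterRegion

/-- The estimates for `W / G` that every element of the tube inherits at the point `s`. -/
structure Tube.Good (t : Tube) (s : ℝ) : Prop where
  ρ_nonneg : 0 ≤ t.ρ
  σ_nonneg : 0 ≤ t.σ
  le_re : 1 / 5 ≤ t.p.re - t.σ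
  norm_le_sqrt : ‖t.p‖ + t.σ ≤ 5 * √(1 + |s|)
  norm_le_re : ‖t.p‖ + t.σ ≤ 25 * (t.p.re - t.σ)

/-- A tube that confines Airy triples on `S` and whose elements obey the estimates of
`Tube.Good`. -/
structure GoodTrap (c : ℝ) (t : ℝ → Tube) (S : Set ℝ) : Prop where
  traps : Traps c t S
  good : ∀ s ∈ S, (t s).Good s

theorem GoodTrap.glue {c m : ℝ} {t₁ t₂ : ℝ → Tube} {S₁ S₂ : Set ℝ} (h₁ : GoodTrap c t₁ S₁)
    (h₂ : GoodTrap c t₂ S₂) (hm₁ : IsGreatest S₁ m) (hm₂ : IsLeast S₂ m)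
    (hm : (t₁ m).Within (t₂ m)) :
    ∃ t, GoodTrap c t (S₁ ∪ S₂) ∧ ∀ s ∉ S₂, t s = t₁ s := by
  classical
  refine ⟨_, ⟨h₁.traps.glue h₂.traps hm₁ hm₂ hm, fun s hs ↦ ?_⟩, fun s hs ↦ if_neg hs⟩
  by_cases hs₂ : s ∈ S₂ <;> simp only [hs₂, if_true, if_false]
  · exact h₂.good s hs₂
  · exact h₁.good s (hs.resolve_right hs₂)

/-- The square root of `i s` with positive real part, for `s` of sign `e = ±1`. -/
noncomputable def rootIs (e s : ℝ) : ℂ := √(e * s / 2) * (1 + e * I)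

theorem rootIs_sq {e s : ℝ} (he : |e| = 1) (hs : 0 ≤ e * s) : rootIs e s ^ 2 = I * s := by
  have hx : (√(e * s / 2) : ℂ) ^ 2 = e * s / 2 := by
    rw [← ofReal_pow, Real.sq_sqrt (by positivity)]
    push_cast
    rfl
  have he' : (e : ℂ) ^ 2 = 1 := by exact_mod_cast (sq_abs e).symm.trans (by rw [he, one_pow])
  rw [rootIs, mul_pow, hx]
  linear_combination (s * e ^ 3 / 2 : ℂ) * I_sq + (s * I - s * e / 2 : ℂ) * he'

theorem rootIs_re (e s : ℝ) : (rootIs e s).re = √(e * s / 2) := by simp [rootIs]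

theorem norm_one_add_mul_I {e : ℝ} (he : |e| = 1) : ‖(1 + e * I : ℂ)‖ = √2 := by
  rw [norm_def, normSq_apply]
  simp [← sq, ← sq_abs e, he, one_add_one_eq_two]

theorem norm_rootIs {e : ℝ} (he : |e| = 1) (s : ℝ) : ‖rootIs e s‖ = √2 * √(e * s / 2) := by
  rw [rootIs, norm_mul, norm_one_add_mul_I he, norm_real, Real.norm_of_nonneg (Real.sqrt_nonneg _),
    mul_comm]

theorem hasDerivAt_rootIs {e s : ℝ} (hs : 0 < e * s) :
    HasDerivAt (rootIs e) ((e / (4 * √(e * s / 2)) : ℝ) * (1 + e * I)) s := by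
  have := (((hasDerivAt_id s).const_mul e).div_const 2).sqrt (by simp only [id]; positivity)
  refine (HasDerivAt.ofReal_comp (this.congr_deriv ?_)).mul_const _
  simp only [id]
  ring

/-- Far from the turning point `s = 0` the tube follows the slowly varying root of `i s`. -/
noncomputable def outerTube (e s : ℝ) : Tube := ⟨rootIs e s, rootIs e s, 1 / 4, 4 / 5⟩

theorem le_sqrt_half {e s : ℝ} (hs : 25 / 2 ≤ e * s) : 5 / 2 ≤ √(e * s / 2) :=
  Real.le_sqrt_of_sq_le (by linarith)

theorem sqrt_two_le : √2 ≤ 1.4143 := Real.sqrt_le_iff.2 ⟨by norm_num, by norm_num⟩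

theorem good_outerTube {e s : ℝ} (he : |e| = 1) (hs : 25 / 2 ≤ e * s) :
    (outerTube e s).Good s := by
  have hx := le_sqrt_half hs
  have := sqrt_two_le
  have hx_le : √(e * s / 2) ≤ √(1 + |s|) := by
    have : |e * s| = |s| := by rw [abs_mul, he, one_mul]
    exact Real.sqrt_le_sqrt (by linarith [le_abs_self (e * s), abs_nonneg s])
  refine ⟨by norm_num [outerTube], by norm_num [outerTube], ?_, ?_, ?_⟩ <;>
    simp only [outerTube, norm_rootIs he, rootIs_re] <;> nlinarith

theorem goodTrap_outerTube {c e : ℝ} (hc : |c| ≤ 1) (he : |e| = 1) :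
    GoodTrap c (outerTube e) {s | 25 / 2 ≤ e * s} := by
  have := sqrt_two_le
  have hnorm_deriv {s : ℝ} (hs : 25 / 2 ≤ e * s) :
      ‖((e / (4 * √(e * s / 2)) : ℝ) * (1 + e * I) : ℂ)‖ ≤ 0.14143 := by
    have hx := le_sqrt_half hs
    rw [norm_mul, norm_one_add_mul_I he, norm_real, Real.norm_eq_abs, abs_div, he,
      abs_of_pos (by positivity), div_mul_eq_mul_div, div_le_iff₀ (by positivity)]
    linarith
  have hord : OrdConnected {s | 25 / 2 ≤ e * s} := by
    refine ⟨fun a ha b hb s hs ↦ ?_⟩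
    rcases (abs_eq zero_le_one).1 he with rfl | rfl <;> simp only [mem_ofPred_eq] at * <;>
      linarith [hs.1, hs.2]
  refine ⟨traps_of_deriv (ρ' := fun _ ↦ 0) (σ' := fun _ ↦ 0) hord
    (fun s hs ↦ hasDerivAt_rootIs (lt_of_lt_of_le (by norm_num) hs))
    (fun s hs ↦ hasDerivAt_rootIs (lt_of_lt_of_le (by norm_num) hs))
    (fun s _ ↦ hasDerivAt_const s _) (fun s _ ↦ hasDerivAt_const s _)
    (fun _ _ ↦ by norm_num) (fun _ _ ↦ by norm_num) continuousOn_const continuousOn_const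
    (fun s hs ↦ ?_) (fun s hs ↦ ?_), fun s hs ↦ good_outerTube he hs⟩
  · have hx := le_sqrt_half hs
    rw [rootIs_sq he (le_trans (by norm_num) hs), add_sub_cancel_left, rootIs_re]
    have := (norm_sub_le (c : ℂ) _).trans (add_le_add_right (hnorm_deriv hs) _)
    rw [norm_real, Real.norm_eq_abs] at this
    linarith
  · have hx := le_sqrt_half hs
    rw [sub_self, mul_zero, zero_sub, norm_neg, two_mul, add_sub_cancel_right, norm_rootIs he,
      rootIs_re]
    nlinarith [hnorm_deriv hs]

end OuterRegion

section Interpolation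

theorem norm_quadratic_interpolation_add_le {R₀ R₁ D : ℂ} {a A d δ ε r₀ r₁ τ : ℝ}
    (hτ : τ ∈ Icc (0 : ℝ) 1) (hA : a ≤ A) (hr₀ : 0 ≤ r₀) (hr₁ : 0 ≤ r₁) (hD : ‖D‖ ≤ 4 * δ)
    (h₀ : ‖R₀‖ ≤ d + a * r₀ - r₀ ^ 2 - δ - ε) (h₁ : ‖R₁‖ ≤ d + a * r₁ - r₁ ^ 2 - δ - ε) :
    ‖(1 - τ) * R₀ + τ * R₁ + τ * (1 - τ) * D‖ + ε ≤
      d + A * ((1 - τ) * r₀ + τ * r₁) - ((1 - τ) * r₀ + τ * r₁) ^ 2 := by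
  obtain ⟨hτ₀, hτ₁⟩ := hτ
  have hτ₁' : 0 ≤ 1 - τ := sub_nonneg.2 hτ₁
  have norm_le : ‖(1 - τ) * R₀ + τ * R₁ + τ * (1 - τ) * D‖ ≤
      (1 - τ) * ‖R₀‖ + τ * ‖R₁‖ + τ * (1 - τ) * ‖D‖ := by
    refine norm_add₃_le.trans_eq ?_
    simp only [norm_mul, ← ofReal_one, ← ofReal_sub, norm_real, Real.norm_of_nonneg hτ₀,
      Real.norm_of_nonneg hτ₁']
  have hδ : τ * (1 - τ) * ‖D‖ ≤ δ := by
    nlinarith [sq_nonneg (2 * τ - 1), norm_nonneg D, mul_nonneg (sq_nonneg (2 * τ - 1))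
      (norm_nonneg D)]
  have hr : 0 ≤ (1 - τ) * r₀ + τ * r₁ := by positivity
  have hconvex : ((1 - τ) * r₀ + τ * r₁) ^ 2 ≤ (1 - τ) * r₀ ^ 2 + τ * r₁ ^ 2 := by
    nlinarith [mul_nonneg (mul_nonneg hτ₀ hτ₁') (sq_nonneg (r₀ - r₁))]
  have := mul_le_mul_of_nonneg_right hA hr
  have := mul_le_mul_of_nonneg_left h₀ hτ₁'
  have := mul_le_mul_of_nonneg_left h₁ hτ₀
  linarith

theorem le_interpolation {a x y τ : ℝ} (hτ : τ ∈ Icc (0 : ℝ) 1) (hx : a ≤ x) (hy : a ≤ y) :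
    a ≤ (1 - τ) * x + τ * y := by
  nlinarith [mul_le_mul_of_nonneg_left hx (sub_nonneg.2 hτ.2), mul_le_mul_of_nonneg_left hy hτ.1]

theorem interpolation_le {a x y τ : ℝ} (hτ : τ ∈ Icc (0 : ℝ) 1) (hx : x ≤ a) (hy : y ≤ a) :
    (1 - τ) * x + τ * y ≤ a := by
  nlinarith [mul_le_mul_of_nonneg_left hx (sub_nonneg.2 hτ.2), mul_le_mul_of_nonneg_left hy hτ.1]

theorem norm_interpolation_le {a τ : ℝ} {x y : ℂ} (hτ : τ ∈ Icc (0 : ℝ) 1) (hx : ‖x‖ ≤ a)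
    (hy : ‖y‖ ≤ a) : ‖(1 - τ) * x + τ * y‖ ≤ a := by
  refine (norm_add_le _ _).trans ?_
  rw [norm_mul, norm_mul, ← ofReal_one, ← ofReal_sub, norm_real, norm_real,
    Real.norm_of_nonneg hτ.1, Real.norm_of_nonneg (sub_nonneg.2 hτ.2)]
  exact interpolation_le hτ hx hy

end Interpolation

section Certificate

/-- A tube `⟨q, p, ρ, σ⟩` with rational data at the rational time `s`, together with an upper bound
`m` for `|p|` that keeps square roots out of the certificate. -/
structure Node where
  s : ℚ
  qRe : ℚ
  qIm : ℚ
  pRe : ℚ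
  pIm : ℚ
  ρ : ℚ
  σ : ℚ
  m : ℚ

namespace Node

/-- Times are multiples of `1 / 16`; everything else is given in thousandths. -/
def ofRow : ℤ × ℤ × ℤ × ℤ × ℤ × ℤ × ℤ × ℤ → Node
  | (s, qRe, qIm, pRe, pIm, ρ, σ, m) => ⟨s / 16, qRe / 1000, qIm / 1000, pRe / 1000, pIm / 1000,
      ρ / 1000, σ / 1000, m / 1000⟩

/-- The centre for `V / W` at a node. -/
noncomputable def q (x : Node) : ℂ := ⟨x.qRe, x.qIm⟩

/-- The centre for `W / G` at a node. -/
noncomputable def p (x : Node) : ℂ := ⟨x.pRe, x.pIm⟩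

/-- The tube recorded by a node. -/
noncomputable def tube (x : Node) : Tube := ⟨x.q, x.p, x.ρ, x.σ⟩

/-- The rational conditions at a node that imply `Tube.Good`. -/
structure Good (x : Node) : Prop where
  ρ_pos : 0 < x.ρ
  σ_pos : 0 < x.σ
  m_nonneg : 0 ≤ x.m
  sq_le : x.pRe ^ 2 + x.pIm ^ 2 ≤ x.m ^ 2
  le_re : 1 / 5 ≤ x.pRe - x.σ
  le_five : x.m + x.σ ≤ 5

/-- The slope between two nodes of the linear interpolant of a component of the data. -/
def slope (f : Node → ℚ) (x y : Node) : ℚ := (f y - f x) / (y.s - x.s)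

/-- The upper bound that the certificate imposes on the residual `i s + c - q² - q'` of the Riccati
equation at an end `e` of the edge from `x` to `y`. The term with `1 / 4` is the error of linear
interpolation, and `w` is the half-width of the band of parameters `c`. -/
def qSlack (w : ℚ) (x y e : Node) : ℚ :=
  slope ρ x y + 2 * min x.qRe y.qRe * e.ρ - e.ρ ^ 2 -
    ((y.qRe - x.qRe) ^ 2 + (y.qIm - x.qIm) ^ 2) / 4 - w

/-- As `qSlack`, for the residual `p (q - p) - p'`. -/
def pSlack (x y e : Node) : ℚ :=
  slope σ x y + min (2 * x.pRe - x.qRe) (2 * y.pRe - y.qRe) * e.σ - e.σ ^ 2 -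
    ((y.pRe - x.pRe) ^ 2 + (y.pIm - x.pIm) ^ 2 + (y.qRe - y.pRe - (x.qRe - x.pRe)) ^ 2 +
      (y.qIm - y.pIm - (x.qIm - x.pIm)) ^ 2) / 8 - max x.ρ y.ρ * (max x.m y.m + max x.σ y.σ)

/-- The two residual conditions at an end `e` of the edge from `x` to `y`, squared. -/
def EdgeEnd (c w : ℚ) (x y e : Node) : Prop :=
  0 ≤ qSlack w x y e ∧ 0 ≤ pSlack x y e ∧
  (c - (e.qRe ^ 2 - e.qIm ^ 2) - slope qRe x y) ^ 2 + (e.s - 2 * e.qRe * e.qIm - slope qIm x y) ^ 2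
    ≤ qSlack w x y e ^ 2 ∧
  (e.pRe * (e.qRe - e.pRe) - e.pIm * (e.qIm - e.pIm) - slope pRe x y) ^ 2 +
    (e.pRe * (e.qIm - e.pIm) + e.pIm * (e.qRe - e.pRe) - slope pIm x y) ^ 2 ≤ pSlack x y e ^ 2

/-- The conditions under which linear interpolation between `x` and `y` is a good trap, for all
parameters in `[c - w, c + w]`. -/
def Edge (c w : ℚ) (x y : Node) : Prop :=
  x.s < y.s ∧ x.Good ∧ y.Good ∧ EdgeEnd c w x y x ∧ EdgeEnd c w x y y

/-- The tube at `-25 / 2` contains the outer tube coming from the left. -/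
def Entry (x : Node) : Prop :=
  x.s = -25 / 2 ∧ 1 / 4 ≤ x.ρ ∧ (x.qRe - 5 / 2) ^ 2 + (x.qIm + 5 / 2) ^ 2 ≤ (x.ρ - 1 / 4) ^ 2 ∧
    4 / 5 ≤ x.σ ∧ (x.pRe - 5 / 2) ^ 2 + (x.pIm + 5 / 2) ^ 2 ≤ (x.σ - 4 / 5) ^ 2

/-- The tube at `25 / 2` is contained in the outer tube leaving to the right. -/
def Exit (x : Node) : Prop :=
  x.s = 25 / 2 ∧ x.ρ ≤ 1 / 4 ∧ (x.qRe - 5 / 2) ^ 2 + (x.qIm - 5 / 2) ^ 2 ≤ (1 / 4 - x.ρ) ^ 2 ∧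
    x.σ ≤ 4 / 5 ∧ (x.pRe - 5 / 2) ^ 2 + (x.pIm - 5 / 2) ^ 2 ≤ (4 / 5 - x.σ) ^ 2

/-- A list of nodes that crosses the middle region `[-25 / 2, 25 / 2]`, for all parameters in
`[c - w, c + w]`. -/
def Certifies (c w : ℚ) : List Node → Prop
  | [] => False
  | x :: l => x.Entry ∧ ((x :: l).getLast (List.cons_ne_nil x l)).Exit ∧
      (x :: l).IsChain (Edge c w)

instance : DecidablePred Good := fun x ↦
  decidable_of_iff (0 < x.ρ ∧ 0 < x.σ ∧ 0 ≤ x.m ∧ x.pRe ^ 2 + x.pIm ^ 2 ≤ x.m ^ 2 ∧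
      1 / 5 ≤ x.pRe - x.σ ∧ x.m + x.σ ≤ 5)
    ⟨fun ⟨hρ, hσ, hm, hsq, hre, hfive⟩ ↦ ⟨hρ, hσ, hm, hsq, hre, hfive⟩,
      fun ⟨hρ, hσ, hm, hsq, hre, hfive⟩ ↦ ⟨hρ, hσ, hm, hsq, hre, hfive⟩⟩

instance : DecidablePred Entry := fun x ↦ by unfold Entry; infer_instance

instance : DecidablePred Exit := fun x ↦ by unfold Exit; infer_instance

instance (c w : ℚ) : DecidableRel (Edge c w) := fun x y ↦ by
  unfold Edge EdgeEnd
  infer_instance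

instance (c w : ℚ) : DecidablePred (Certifies c w)
  | [] => inferInstanceAs (Decidable False)
  | x :: l => by unfold Certifies; infer_instance

theorem norm_mk_ratCast_le {a b r : ℚ} (hr : 0 ≤ r) (h : a ^ 2 + b ^ 2 ≤ r ^ 2) :
    ‖(⟨a, b⟩ : ℂ)‖ ≤ r := by
  rw [norm_def, Real.sqrt_le_left (by exact_mod_cast hr), normSq_mk, ← sq, ← sq]
  exact_mod_cast h

variable {c w : ℚ} {x y e : Node}

theorem Good.norm_p_le (h : x.Good) : ‖x.p‖ ≤ x.m :=
  norm_mk_ratCast_le h.m_nonneg h.sq_le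

theorem mk_slope (f g : Node → ℚ) (x y : Node) :
    (⟨slope f x y, slope g x y⟩ : ℂ) = (⟨f y, g y⟩ - ⟨f x, g x⟩) / ((y.s - x.s : ℝ) : ℂ) := by
  apply Complex.ext
  · rw [div_ofReal_re]
    simp [slope]
  · rw [div_ofReal_im]
    simp [slope]

/-- The slope between two nodes of the interpolated centre `q`. -/
noncomputable def qSlope (x y : Node) : ℂ := ⟨slope qRe x y, slope qIm x y⟩

/-- The slope between two nodes of the interpolated centre `p`. -/
noncomputable def pSlope (x y : Node) : ℂ := ⟨slope pRe x y, slope pIm x y⟩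

theorem EdgeEnd.norm_q_residual_le (h : EdgeEnd c w x y e) :
    ‖I * e.s + c - e.q ^ 2 - qSlope x y‖ ≤ qSlack w x y e := by
  refine (norm_mk_ratCast_le h.1 h.2.2.1).trans_eq' (congrArg _ (Complex.ext ?_ ?_))
  all_goals
    simp only [sq, q, qSlope, sub_re, sub_im, add_re, add_im, mul_re, mul_im, I_re, I_im,
      ratCast_re, ratCast_im]
    push_cast
    ring

theorem EdgeEnd.norm_p_residual_le (h : EdgeEnd c w x y e) :
    ‖e.p * (e.q - e.p) - pSlope x y‖ ≤ pSlack x y e := by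
  refine (norm_mk_ratCast_le h.2.1 h.2.2.2).trans_eq' (congrArg _ (Complex.ext ?_ ?_)) <;>
    simp [p, q, pSlope]

/-- The position of the time `s` between two nodes, `0` at the first and `1` at the second. -/
noncomputable def weight (x y : Node) (s : ℝ) : ℝ := (s - x.s) / (y.s - x.s)

/-- Linear interpolation between two nodes. -/
noncomputable def interpolate (x y : Node) (s : ℝ) : Tube :=
  ⟨(1 - weight x y s) * x.q + weight x y s * y.q, (1 - weight x y s) * x.p + weight x y s * y.p,
    (1 - weight x y s) * x.ρ + weight x y s * y.ρ, (1 - weight x y s) * x.σ + weight x y s * y.σ⟩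

theorem interpolate_left (x y : Node) : interpolate x y x.s = x.tube := by
  simp [interpolate, weight, tube]

theorem interpolate_right (h : x.s < y.s) : interpolate x y y.s = y.tube := by
  have : (y.s - x.s : ℝ) ≠ 0 := by exact_mod_cast (sub_pos.2 h).ne'
  simp [interpolate, weight, tube, div_self this]

theorem weight_mem_Icc (h : x.s < y.s) {s : ℝ} (hs : s ∈ Icc (x.s : ℝ) y.s) :
    weight x y s ∈ Icc (0 : ℝ) 1 := by
  have : (0 : ℝ) < y.s - x.s := by exact_mod_cast sub_pos.2 h
  exact ⟨div_nonneg (sub_nonneg.2 hs.1) this.le, (div_le_one this).2 (by linarith [hs.2])⟩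

theorem eq_interpolation_weight (h : x.s < y.s) (s : ℝ) :
    s = (1 - weight x y s) * x.s + weight x y s * y.s := by
  have : (y.s - x.s : ℝ) ≠ 0 := by exact_mod_cast (sub_pos.2 h).ne'
  rw [weight]
  field_simp
  ring

theorem hasDerivAt_weight (x y : Node) (s : ℝ) :
    HasDerivAt (weight x y) (1 / (y.s - x.s) : ℝ) s :=
  ((hasDerivAt_id s).sub_const _).div_const _

theorem hasDerivAt_interpolation_weight (x y : Node) (a b : ℝ) (s : ℝ) :
    HasDerivAt (fun s ↦ (1 - weight x y s) * a + weight x y s * b) ((b - a) / (y.s - x.s)) s :=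
  ((((hasDerivAt_weight x y s).const_sub 1).mul_const a).add
    ((hasDerivAt_weight x y s).mul_const b)).congr_deriv (by ring)

theorem hasDerivAt_interpolation_weight_complex (x y : Node) (a b : ℂ) (s : ℝ) :
    HasDerivAt (fun s ↦ (1 - weight x y s) * a + weight x y s * b)
      ((b - a) / ((y.s - x.s : ℝ) : ℂ)) s := by
  have := (hasDerivAt_weight x y s).ofReal_comp
  exact (((this.const_sub 1).mul_const a).add (this.mul_const b)).congr_deriv (by push_cast; ring)

theorem q_re_interpolate (x y : Node) (s : ℝ) :
    (interpolate x y s).q.re = (1 - weight x y s) * x.qRe + weight x y s * y.qRe := by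
  simp [interpolate, q, -ofReal_ratCast]

theorem p_re_interpolate (x y : Node) (s : ℝ) :
    (interpolate x y s).p.re = (1 - weight x y s) * x.pRe + weight x y s * y.pRe := by
  simp [interpolate, p]

theorem norm_sq_mk_ratCast (a b : ℚ) : ‖(⟨a, b⟩ : ℂ)‖ ^ 2 = (a ^ 2 + b ^ 2 : ℚ) := by
  rw [← normSq_eq_norm_sq, normSq_mk]
  push_cast
  ring

theorem norm_q_sub_sq (x y : Node) :
    ‖y.q - x.q‖ ^ 2 = ((y.qRe - x.qRe) ^ 2 + (y.qIm - x.qIm) ^ 2 : ℚ) := by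
  rw [← norm_sq_mk_ratCast]
  congr 2
  apply Complex.ext <;> simp [q]

theorem norm_p_sub_sq (x y : Node) :
    ‖y.p - x.p‖ ^ 2 = ((y.pRe - x.pRe) ^ 2 + (y.pIm - x.pIm) ^ 2 : ℚ) := by
  rw [← norm_sq_mk_ratCast]
  congr 2
  apply Complex.ext <;> simp [p]

theorem norm_q_sub_p_sub_sq (x y : Node) :
    ‖(y.q - y.p) - (x.q - x.p)‖ ^ 2 = ((y.qRe - y.pRe - (x.qRe - x.pRe)) ^ 2 +
      (y.qIm - y.pIm - (x.qIm - x.pIm)) ^ 2 : ℚ) := by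
  rw [← norm_sq_mk_ratCast]
  congr 2
  apply Complex.ext <;> simp [q, p]

theorem Edge.norm_q_residual_le (h : Edge c w x y) {γ : ℝ} (hγ : |γ - c| ≤ w) {s : ℝ}
    (hs : s ∈ Icc (x.s : ℝ) y.s) :
    ‖I * s + γ - (interpolate x y s).q ^ 2 - qSlope x y‖ ≤ slope ρ x y +
      2 * (interpolate x y s).q.re * (interpolate x y s).ρ - (interpolate x y s).ρ ^ 2 := by
  obtain ⟨hxy, hx, hy, hx_end, hy_end⟩ := h
  have hτ := weight_mem_Icc hxy hs
  have hs_eq := congrArg ofReal (eq_interpolation_weight hxy s)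
  push_cast at hs_eq
  have hmin : ((min x.qRe y.qRe : ℚ) : ℝ) ≤ (interpolate x y s).q.re := by
    rw [q_re_interpolate]
    exact le_interpolation hτ (by exact_mod_cast min_le_left _ _)
      (by exact_mod_cast min_le_right _ _)
  have hx_res := hx_end.norm_q_residual_le
  have hy_res := hy_end.norm_q_residual_le
  simp only [qSlack, Rat.cast_sub, Rat.cast_add, Rat.cast_mul, Rat.cast_pow, Rat.cast_ofNat]
    at hx_res hy_res
  have key := norm_quadratic_interpolation_add_le (D := (y.q - x.q) ^ 2) hτ
    (mul_le_mul_of_nonneg_left hmin zero_le_two) (by exact_mod_cast hx.ρ_pos.le)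
    (by exact_mod_cast hy.ρ_pos.le) (by rw [norm_pow, norm_q_sub_sq]; push_cast; linarith)
    hx_res hy_res
  refine le_trans ?_ key
  rw [show I * s + γ - (interpolate x y s).q ^ 2 - qSlope x y =
    ((1 - weight x y s) * (I * x.s + c - x.q ^ 2 - qSlope x y) +
      weight x y s * (I * y.s + c - y.q ^ 2 - qSlope x y) +
      weight x y s * (1 - weight x y s) * (y.q - x.q) ^ 2) + (γ - c : ℝ) by
    rw [interpolate]
    push_cast
    linear_combination I * hs_eq]
  refine (norm_add_le _ _).trans (add_le_add_right ?_ _)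
  rwa [norm_real]

theorem norm_p_interpolate_le (hx : x.Good) (hy : y.Good) {s : ℝ} (hs : weight x y s ∈ Icc 0 1) :
    ‖(interpolate x y s).p‖ ≤ (max x.m y.m : ℚ) :=
  norm_interpolation_le hs (hx.norm_p_le.trans (by exact_mod_cast le_max_left _ _))
    (hy.norm_p_le.trans (by exact_mod_cast le_max_right _ _))

theorem Edge.norm_p_residual_le (h : Edge c w x y) {s : ℝ} (hs : s ∈ Icc (x.s : ℝ) y.s) :
    ‖(interpolate x y s).p * ((interpolate x y s).q - (interpolate x y s).p) - pSlope x y‖ +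
        (interpolate x y s).ρ * (‖(interpolate x y s).p‖ + (interpolate x y s).σ) ≤
      slope σ x y + (2 * (interpolate x y s).p - (interpolate x y s).q).re *
        (interpolate x y s).σ - (interpolate x y s).σ ^ 2 := by
  obtain ⟨hxy, hx, hy, hx_end, hy_end⟩ := h
  have hτ := weight_mem_Icc hxy hs
  have hmin : ((min (2 * x.pRe - x.qRe) (2 * y.pRe - y.qRe) : ℚ) : ℝ) ≤
      (2 * (interpolate x y s).p - (interpolate x y s).q).re := by
    rw [sub_re, show (2 : ℂ) = (2 : ℝ) by rfl, re_ofReal_mul, p_re_interpolate, q_re_interpolate]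
    refine (le_interpolation hτ (x := 2 * x.pRe - x.qRe) (y := 2 * y.pRe - y.qRe)
      (by exact_mod_cast min_le_left _ _) (by exact_mod_cast min_le_right _ _)).trans_eq (by ring)
  have hx_res := hx_end.norm_p_residual_le
  have hy_res := hy_end.norm_p_residual_le
  simp only [pSlack, Rat.cast_sub, Rat.cast_add, Rat.cast_mul, Rat.cast_pow] at hx_res hy_res
  have hD : ‖-((y.p - x.p) * ((y.q - y.p) - (x.q - x.p)))‖ ≤
      (‖y.p - x.p‖ ^ 2 + ‖(y.q - y.p) - (x.q - x.p)‖ ^ 2) / 2 := by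
    rw [norm_neg, norm_mul]
    linarith [two_mul_le_add_sq ‖y.p - x.p‖ ‖(y.q - y.p) - (x.q - x.p)‖]
  rw [norm_p_sub_sq, norm_q_sub_p_sub_sq] at hD
  have key := norm_quadratic_interpolation_add_le hτ hmin (by exact_mod_cast hx.σ_pos.le)
    (by exact_mod_cast hy.σ_pos.le) (hD.trans_eq (by push_cast; ring)) hx_res hy_res
  refine le_trans (add_le_add (le_of_eq ?_) ?_) key
  · rw [interpolate]
    ring_nf
  · have hρ : (interpolate x y s).ρ ≤ (max x.ρ y.ρ : ℚ) := interpolation_le hτ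
      (by exact_mod_cast le_max_left _ _) (by exact_mod_cast le_max_right _ _)
    have hσ : (interpolate x y s).σ ≤ (max x.σ y.σ : ℚ) := interpolation_le hτ
      (by exact_mod_cast le_max_left _ _) (by exact_mod_cast le_max_right _ _)
    have hσ_nonneg : 0 ≤ (interpolate x y s).σ := le_interpolation hτ
      (by exact_mod_cast hx.σ_pos.le) (by exact_mod_cast hy.σ_pos.le)
    gcongr
    · exact_mod_cast hx.ρ_pos.le.trans (le_max_left _ _)
    · exact norm_p_interpolate_le hx hy hτ

theorem Good.ratCast_le_re (h : x.Good) : (1 / 5 : ℝ) ≤ x.pRe - x.σ := by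
  have := (Rat.cast_le (K := ℝ)).2 h.le_re
  push_cast at this
  exact this

theorem Edge.good_interpolate (h : Edge c w x y) {s : ℝ} (hs : s ∈ Icc (x.s : ℝ) y.s) :
    (interpolate x y s).Good s := by
  obtain ⟨hxy, hx, hy, -⟩ := h
  have hτ := weight_mem_Icc hxy hs
  have hre : 1 / 5 ≤ (interpolate x y s).p.re - (interpolate x y s).σ := by
    rw [p_re_interpolate, interpolate]
    exact (le_interpolation hτ hx.ratCast_le_re hy.ratCast_le_re).trans_eq (by ring)
  have hnorm : ‖(interpolate x y s).p‖ + (interpolate x y s).σ ≤ 5 := by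
    have hp : ‖(interpolate x y s).p‖ ≤ (1 - weight x y s) * x.m + weight x y s * y.m := by
      refine (norm_add_le _ _).trans ?_
      rw [norm_mul, norm_mul, ← ofReal_one, ← ofReal_sub, norm_real, norm_real,
        Real.norm_of_nonneg hτ.1, Real.norm_of_nonneg (sub_nonneg.2 hτ.2)]
      exact add_le_add (mul_le_mul_of_nonneg_left hx.norm_p_le (sub_nonneg.2 hτ.2))
        (mul_le_mul_of_nonneg_left hy.norm_p_le hτ.1)
    have := interpolation_le hτ (x := x.m + x.σ) (y := y.m + y.σ) (a := 5)
      (by exact_mod_cast hx.le_five) (by exact_mod_cast hy.le_five)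
    simp only [interpolate] at hp ⊢
    linarith
  refine ⟨le_interpolation hτ (by exact_mod_cast hx.ρ_pos.le) (by exact_mod_cast hy.ρ_pos.le),
    le_interpolation hτ (by exact_mod_cast hx.σ_pos.le) (by exact_mod_cast hy.σ_pos.le), hre, ?_,
    by linarith⟩
  have : 1 ≤ √(1 + |s|) := Real.one_le_sqrt.2 (by linarith [abs_nonneg s])
  linarith

theorem Edge.goodTrap_interpolate (h : Edge c w x y) {γ : ℝ} (hγ : |γ - c| ≤ w) :
    GoodTrap γ (interpolate x y) (Icc x.s y.s) := by
  obtain ⟨hxy, hx, hy, -⟩ := id h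
  refine ⟨traps_of_deriv (q' := fun _ ↦ qSlope x y) (p' := fun _ ↦ pSlope x y)
    (ρ' := fun _ ↦ slope ρ x y) (σ' := fun _ ↦ slope σ x y) ordConnected_Icc (fun s _ ↦ ?_)
    (fun s _ ↦ ?_) (fun s _ ↦ ?_) (fun s _ ↦ ?_) (fun s hs ↦ ?_) (fun s hs ↦ ?_) continuousOn_const
    continuousOn_const (fun s hs ↦ h.norm_q_residual_le hγ hs)
    (fun s hs ↦ h.norm_p_residual_le hs), fun s hs ↦ h.good_interpolate hs⟩
  · exact (hasDerivAt_interpolation_weight_complex x y x.q y.q s).congr_deriv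
      (mk_slope qRe qIm x y).symm
  · exact (hasDerivAt_interpolation_weight_complex x y x.p y.p s).congr_deriv
      (mk_slope pRe pIm x y).symm
  · exact (hasDerivAt_interpolation_weight x y x.ρ y.ρ s).congr_deriv (by simp [slope])
  · exact (hasDerivAt_interpolation_weight x y x.σ y.σ s).congr_deriv (by simp [slope])
  · exact (lt_min (by exact_mod_cast hx.ρ_pos) (by exact_mod_cast hy.ρ_pos)).trans_le
      (le_interpolation (weight_mem_Icc hxy hs) (min_le_left _ _) (min_le_right _ _))
  · exact (lt_min (by exact_mod_cast hx.σ_pos) (by exact_mod_cast hy.σ_pos)).trans_le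
      (le_interpolation (weight_mem_Icc hxy hs) (min_le_left _ _) (min_le_right _ _))

theorem rootIs_boundary {e s : ℝ} (hs : e * s = 25 / 2) : rootIs e s = 5 / 2 * (1 + e * I) := by
  rw [rootIs, hs, show (25 / 2 / 2 : ℝ) = (5 / 2) ^ 2 by norm_num, Real.sqrt_sq (by norm_num)]
  push_cast
  rfl

theorem norm_mk_ratCast_sub_le {a b a' b' r : ℚ} (hr : 0 ≤ r)
    (h : (a - a') ^ 2 + (b - b') ^ 2 ≤ r ^ 2) : ‖(⟨a, b⟩ - ⟨a', b'⟩ : ℂ)‖ ≤ r := by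
  convert norm_mk_ratCast_le hr h using 2
  apply Complex.ext <;> simp

theorem Exit.within_outerTube (h : x.Exit) : x.tube.Within (outerTube 1 x.s) := by
  obtain ⟨hs, hρ, hq, hσ, hp⟩ := h
  have hroot : rootIs 1 x.s = ⟨(5 / 2 : ℚ), (5 / 2 : ℚ)⟩ := by
    rw [rootIs_boundary (by rw [hs]; norm_num)]
    apply Complex.ext <;> norm_num
  have hq' := norm_mk_ratCast_sub_le (sub_nonneg.2 hρ) hq
  have hp' := norm_mk_ratCast_sub_le (sub_nonneg.2 hσ) hp
  rw [← hroot] at hq' hp'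
  push_cast at hq' hp'
  exact ⟨le_sub_iff_add_le.1 hq', le_sub_iff_add_le.1 hp'⟩

theorem Entry.outerTube_within (h : x.Entry) : (outerTube (-1) x.s).Within x.tube := by
  obtain ⟨hs, hρ, hq, hσ, hp⟩ := h
  have hroot : rootIs (-1) x.s = ⟨(5 / 2 : ℚ), (-(5 / 2) : ℚ)⟩ := by
    rw [rootIs_boundary (by rw [hs]; norm_num)]
    apply Complex.ext <;> norm_num
  rw [← sub_neg_eq_add x.qIm] at hq
  rw [← sub_neg_eq_add x.pIm] at hp
  have hq' := norm_mk_ratCast_sub_le (sub_nonneg.2 hρ) hq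
  have hp' := norm_mk_ratCast_sub_le (sub_nonneg.2 hσ) hp
  rw [← hroot, norm_sub_rev] at hq' hp'
  push_cast at hq' hp'
  exact ⟨le_sub_iff_add_le.1 hq', le_sub_iff_add_le.1 hp'⟩

theorem exists_goodTrap_Ici {γ : ℝ} (hγ : |γ| ≤ 1) (hγc : |γ - c| ≤ w) {l : List Node}
    (hchain : (x :: l).IsChain (Edge c w)) (hexit : ((x :: l).getLast (by simp)).Exit) :
    ∃ t, GoodTrap γ t (Ici x.s) ∧ x.tube.Within (t x.s) := by
  induction l generalizing x with
  | nil =>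
    refine ⟨outerTube 1, ?_, hexit.within_outerTube⟩
    have hs : (x.s : ℝ) = 25 / 2 := by rw [show x.s = 25 / 2 from hexit.1]; norm_num
    convert goodTrap_outerTube hγ abs_one using 1
    ext s
    rw [mem_Ici, hs, mem_ofPred_eq, one_mul]
  | cons y l ih =>
    rw [List.isChain_cons_cons] at hchain
    obtain ⟨t₂, ht₂, hy⟩ := ih hchain.2 hexit
    have hxy : (x.s : ℝ) < y.s := by exact_mod_cast hchain.1.1
    obtain ⟨t, ht, ht_eq⟩ := (hchain.1.goodTrap_interpolate hγc).glue ht₂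
      (isGreatest_Icc hxy.le) isLeast_Ici (by rwa [interpolate_right hchain.1.1])
    rw [Icc_union_Ici_eq_Ici hxy.le] at ht
    refine ⟨t, ht, ?_⟩
    rw [ht_eq x.s (notMem_Ici.2 hxy), interpolate_left]
    exact .refl _

theorem Certifies.exists_goodTrap_univ {γ : ℝ} (hγ : |γ| ≤ 1) (hγc : |γ - c| ≤ w) {l : List Node}
    (hl : Certifies c w l) : ∃ t, GoodTrap γ t univ := by
  obtain _ | ⟨x, l⟩ := l
  · exact hl.elim
  obtain ⟨hentry, hexit, hchain⟩ := hl
  obtain ⟨t₂, ht₂, hx⟩ := exists_goodTrap_Ici hγ hγc hchain hexit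
  have hs : (x.s : ℝ) = -25 / 2 := by rw [show x.s = -25 / 2 from hentry.1]; norm_num
  have hIic : {s : ℝ | 25 / 2 ≤ -1 * s} = Iic (x.s : ℝ) := by
    ext s
    rw [hs, mem_ofPred_eq, mem_Iic]
    constructor <;> intro h <;> linarith
  have ht₁ := goodTrap_outerTube hγ (by norm_num : |(-1 : ℝ)| = 1)
  rw [hIic] at ht₁
  obtain ⟨t, ht, -⟩ := ht₁.glue ht₂ isGreatest_Iic isLeast_Ici (hentry.outerTube_within.trans hx)
  exact ⟨t, Iic_union_Ici (a := (x.s : ℝ)) ▸ ht⟩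

/-- Nodes for the parameters in `[-1 / 100, 1 / 10]`, found numerically. -/
def nodes₁ : List Node :=
  List.map ofRow
   [(-200, 2524, -2496, 2563, -2497, 275, 864, 3579),
    (-168, 2320, -2287, 2365, -2289, 44, 786, 3292),
    (-136, 2096, -2057, 2151, -2060, 25, 241, 2979),
    (-104, 1846, -1798, 1916, -1803, 38, 114, 2631), (-72, 1561, -1495, 1655, -1507, 39, 93, 2239),
    (-48, 1310, -1222, 1437, -1245, 50, 109, 1902), (-36, 1169, -1060, 1319, -1095, 42, 97, 1715),
    (-28, 1067, -940, 1238, -986, 40, 85, 1583), (-20, 958, -804, 1154, -868, 43, 78, 1445),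
    (-14, 871, -689, 1090, -774, 45, 75, 1337), (-10, 810, -604, 1046, -707, 46, 72, 1263),
    (-6, 748, -511, 1002, -636, 49, 70, 1187), (-2, 684, -409, 958, -563, 53, 70, 1112),
    (1, 636, -324, 925, -505, 56, 69, 1054), (4, 589, -230, 892, -445, 61, 69, 997),
    (6, 558, -163, 870, -404, 63, 69, 960), (8, 529, -91, 849, -361, 65, 70, 923),
    (10, 502, -14, 827, -317, 68, 70, 886), (12, 478, 69, 806, -273, 72, 71, 851),
    (13, 467, 112, 795, -250, 74, 71, 834), (14, 458, 157, 784, -226, 75, 72, 816),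
    (15, 450, 204, 774, -203, 77, 73, 801), (16, 443, 252, 763, -179, 79, 74, 784),
    (17, 439, 301, 753, -155, 81, 75, 769), (18, 436, 351, 742, -130, 83, 76, 754),
    (19, 436, 403, 732, -105, 84, 77, 740), (20, 438, 456, 722, -80, 86, 78, 727),
    (21, 444, 509, 712, -54, 88, 79, 715), (22, 452, 563, 702, -28, 89, 80, 703),
    (23, 464, 617, 692, -1, 91, 81, 693), (24, 478, 671, 682, 26, 93, 82, 683),
    (25, 497, 724, 673, 53, 94, 84, 676), (26, 519, 776, 663, 81, 95, 86, 668),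
    (27, 544, 827, 654, 110, 96, 88, 664), (28, 573, 875, 644, 138, 96, 91, 659),
    (29, 604, 920, 635, 168, 96, 94, 657), (30, 638, 962, 626, 197, 95, 97, 657),
    (31, 675, 1001, 617, 228, 94, 100, 658), (32, 712, 1036, 608, 259, 93, 103, 661),
    (33, 751, 1066, 600, 290, 92, 107, 667), (34, 789, 1093, 592, 322, 90, 111, 674),
    (35, 828, 1116, 584, 355, 88, 115, 684), (36, 865, 1136, 576, 389, 86, 120, 696),
    (37, 901, 1152, 568, 423, 83, 125, 709), (38, 935, 1166, 561, 458, 80, 130, 725),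
    (39, 967, 1177, 554, 494, 77, 135, 743), (40, 997, 1186, 547, 531, 74, 141, 763),
    (41, 1024, 1194, 541, 569, 71, 147, 786), (42, 1049, 1201, 535, 608, 68, 154, 810),
    (43, 1072, 1207, 530, 647, 65, 162, 837), (44, 1093, 1213, 526, 689, 62, 170, 867),
    (46, 1130, 1226, 520, 774, 57, 190, 933), (48, 1161, 1240, 519, 865, 52, 212, 1009),
    (52, 1214, 1274, 536, 1064, 47, 284, 1192), (55, 1250, 1305, 575, 1224, 42, 348, 1353),
    (58, 1285, 1339, 647, 1388, 37, 425, 1532), (60, 1308, 1362, 715, 1491, 34, 473, 1654),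
    (62, 1332, 1385, 800, 1584, 32, 520, 1775), (64, 1356, 1408, 899, 1660, 30, 562, 1888),
    (66, 1379, 1431, 1005, 1716, 29, 596, 1989), (68, 1403, 1453, 1112, 1749, 28, 616, 2073),
    (70, 1426, 1474, 1213, 1761, 27, 622, 2139), (72, 1449, 1495, 1302, 1757, 26, 613, 2187),
    (75, 1483, 1526, 1407, 1733, 25, 585, 2233), (79, 1526, 1566, 1496, 1693, 24, 523, 2260),
    (85, 1588, 1625, 1560, 1664, 23, 418, 2281), (101, 1742, 1771, 1658, 1765, 29, 249, 2422),
    (133, 2014, 2034, 1950, 2039, 41, 151, 2822), (165, 2251, 2266, 2200, 2269, 25, 103, 3161),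
    (197, 2465, 2477, 2423, 2478, 20, 62, 3466), (200, 2484, 2496, 2443, 2497, 17, 54, 3494)]

theorem certifies_nodes₁ : Certifies (9 / 200) (11 / 200) nodes₁ := by
  decide +kernel

/-- Nodes for the parameters in `[1 / 10, 1 / 4]`, found numerically. -/
def nodes₂ : List Node :=
  List.map ofRow
   [(-200, 2537, -2483, 2576, -2485, 291, 878, 3580),
    (-168, 2334, -2273, 2379, -2276, 49, 842, 3293),
    (-136, 2112, -2042, 2167, -2046, 30, 262, 2981),
    (-104, 1865, -1781, 1934, -1787, 42, 123, 2634), (-72, 1582, -1475, 1676, -1489, 46, 104, 2242),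
    (-48, 1337, -1198, 1461, -1225, 60, 130, 1907), (-32, 1151, -975, 1307, -1021, 56, 118, 1659),
    (-20, 996, -775, 1186, -847, 61, 111, 1458), (-12, 885, -617, 1103, -718, 63, 104, 1317),
    (-4, 769, -430, 1019, -578, 77, 107, 1172), (2, 683, -263, 956, -463, 84, 108, 1063),
    (6, 630, -134, 914, -382, 88, 108, 991), (10, 583, 10, 873, -296, 94, 109, 922),
    (13, 556, 130, 843, -228, 98, 110, 874), (16, 540, 260, 813, -158, 103, 111, 829),
    (18, 538, 352, 794, -109, 105, 112, 802), (20, 543, 447, 775, -59, 107, 113, 778),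
    (22, 558, 543, 757, -8, 109, 115, 758), (24, 583, 638, 739, 45, 111, 117, 741),
    (26, 619, 731, 721, 100, 112, 120, 728), (27, 640, 775, 713, 128, 111, 122, 725),
    (28, 664, 817, 704, 156, 110, 125, 722), (29, 690, 858, 696, 185, 109, 127, 721),
    (30, 718, 896, 688, 215, 107, 130, 721), (31, 748, 931, 681, 245, 105, 133, 724),
    (33, 810, 994, 666, 306, 104, 140, 733), (35, 873, 1045, 652, 370, 101, 149, 750),
    (37, 935, 1085, 639, 437, 96, 160, 775), (39, 992, 1116, 629, 506, 90, 172, 808),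
    (42, 1067, 1152, 616, 616, 84, 197, 872), (46, 1147, 1190, 610, 776, 76, 246, 988),
    (50, 1208, 1228, 622, 951, 65, 312, 1137), (53, 1248, 1259, 650, 1091, 57, 367, 1270),
    (56, 1285, 1292, 701, 1234, 50, 431, 1420), (58, 1309, 1315, 749, 1328, 46, 472, 1525),
    (60, 1332, 1338, 810, 1416, 43, 512, 1632), (62, 1356, 1361, 882, 1496, 40, 552, 1737),
    (64, 1379, 1384, 964, 1563, 38, 586, 1837), (66, 1403, 1406, 1051, 1614, 37, 611, 1927),
    (68, 1426, 1429, 1139, 1650, 36, 627, 2005), (70, 1448, 1450, 1222, 1670, 35, 631, 2070),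
    (72, 1471, 1472, 1298, 1678, 34, 622, 2122), (75, 1504, 1503, 1393, 1674, 32, 597, 2178),
    (78, 1536, 1534, 1464, 1662, 31, 550, 2215), (82, 1578, 1574, 1528, 1649, 30, 478, 2249),
    (88, 1638, 1632, 1584, 1653, 28, 375, 2290), (104, 1788, 1779, 1704, 1777, 32, 219, 2462),
    (136, 2053, 2040, 1990, 2044, 51, 154, 2853), (168, 2286, 2272, 2236, 2274, 30, 118, 3190),
    (200, 2497, 2482, 2456, 2484, 24, 72, 3494)]

theorem certifies_nodes₂ : Certifies (7 / 40) (3 / 40) nodes₂ := by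
  decide +kernel

/-- Nodes for the parameters in `[1 / 4, 1 / 2]`, found numerically. -/
def nodes₃ : List Node :=
  List.map ofRow
   [(-200, 2558, -2464, 2596, -2466, 319, 902, 3581),
    (-168, 2356, -2252, 2401, -2255, 61, 1208, 3294),
    (-136, 2136, -2018, 2191, -2024, 40, 381, 2983),
    (-104, 1893, -1755, 1962, -1763, 80, 209, 2638), (-72, 1616, -1445, 1709, -1462, 62, 173, 2250),
    (-48, 1378, -1164, 1500, -1195, 80, 160, 1918), (-32, 1200, -937, 1351, -989, 76, 149, 1675),
    (-20, 1055, -733, 1235, -815, 84, 144, 1480), (-12, 953, -574, 1156, -686, 86, 138, 1345),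
    (-4, 851, -387, 1078, -545, 100, 141, 1208), (2, 779, -222, 1019, -431, 108, 142, 1107),
    (6, 736, -98, 981, -350, 111, 141, 1042), (10, 702, 38, 943, -265, 116, 142, 980),
    (14, 680, 187, 907, -175, 122, 145, 924), (17, 676, 306, 881, -105, 125, 147, 888),
    (20, 685, 429, 856, -31, 128, 151, 857), (23, 710, 553, 832, 45, 131, 156, 834),
    (25, 736, 633, 816, 98, 130, 160, 822), (27, 769, 710, 802, 153, 129, 165, 817),
    (29, 808, 782, 789, 209, 127, 170, 817), (31, 852, 847, 776, 267, 124, 176, 821),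
    (34, 923, 931, 759, 357, 121, 190, 839), (37, 996, 999, 746, 452, 116, 208, 873),
    (40, 1065, 1053, 737, 553, 109, 230, 922), (44, 1146, 1110, 734, 695, 100, 272, 1011),
    (50, 1243, 1182, 759, 927, 88, 375, 1199), (56, 1322, 1253, 840, 1170, 75, 531, 1441),
    (60, 1370, 1300, 933, 1320, 66, 639, 1617), (64, 1416, 1347, 1053, 1443, 59, 750, 1787),
    (68, 1461, 1392, 1187, 1528, 54, 846, 1935), (74, 1527, 1458, 1369, 1587, 51, 972, 2096),
    (82, 1610, 1542, 1528, 1606, 49, 995, 2217), (106, 1834, 1768, 1751, 1767, 64, 834, 2488),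
    (138, 2093, 2031, 2031, 2033, 50, 387, 2874), (170, 2322, 2264, 2273, 2265, 40, 174, 3209),
    (194, 2480, 2424, 2437, 2424, 33, 98, 3438), (200, 2518, 2462, 2476, 2463, 29, 78, 3493)]

theorem certifies_nodes₃ : Certifies (3 / 8) (1 / 8) nodes₃ := by
  decide +kernel

/-- Nodes for the parameters in `[1 / 2, 1]`, found numerically. -/
def nodes₄ : List Node :=
  List.map ofRow
   [(-200, 2596, -2428, 2634, -2431, 370, 951, 3585),
    (-176, 2449, -2268, 2492, -2273, 95, 1568, 3373),
    (-152, 2293, -2098, 2342, -2103, 65, 628, 3148),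
    (-136, 2183, -1976, 2237, -1983, 62, 294, 2990),
    (-120, 2068, -1846, 2128, -1855, 72, 179, 2824),
    (-104, 1946, -1707, 2014, -1719, 70, 138, 2648), (-88, 1818, -1556, 1895, -1572, 90, 148, 2463),
    (-76, 1716, -1434, 1802, -1454, 83, 143, 2316), (-64, 1609, -1301, 1706, -1328, 87, 139, 2162),
    (-52, 1496, -1155, 1607, -1191, 99, 156, 2001), (-44, 1417, -1048, 1539, -1093, 97, 153, 1888),
    (-36, 1336, -933, 1469, -989, 105, 154, 1771), (-28, 1252, -805, 1399, -878, 114, 163, 1652),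
    (-22, 1188, -701, 1346, -789, 117, 164, 1561), (-16, 1124, -587, 1293, -695, 124, 169, 1468),
    (-12, 1082, -504, 1257, -630, 127, 170, 1407), (-8, 1041, -416, 1222, -561, 131, 172, 1345),
    (-4, 1002, -321, 1187, -490, 137, 175, 1285), (-1, 975, -245, 1162, -434, 141, 177, 1241),
    (2, 950, -165, 1137, -377, 145, 179, 1198), (5, 928, -81, 1112, -318, 149, 182, 1157),
    (8, 911, 8, 1088, -256, 153, 186, 1118), (10, 902, 70, 1073, -214, 155, 188, 1095),
    (12, 896, 133, 1058, -171, 157, 190, 1072), (14, 893, 198, 1043, -127, 159, 193, 1051),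
    (16, 894, 263, 1029, -82, 161, 196, 1033), (18, 898, 330, 1015, -35, 163, 200, 1016),
    (20, 907, 396, 1003, 12, 164, 204, 1004), (22, 920, 462, 990, 61, 165, 209, 992),
    (24, 936, 527, 979, 110, 165, 214, 986), (26, 957, 590, 968, 162, 164, 221, 982),
    (28, 982, 651, 959, 214, 163, 228, 983), (30, 1009, 708, 951, 267, 161, 236, 988),
    (32, 1040, 762, 944, 322, 158, 245, 998), (34, 1072, 812, 938, 379, 155, 255, 1012),
    (36, 1105, 858, 934, 437, 151, 266, 1032), (38, 1138, 901, 932, 496, 147, 278, 1056),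
    (40, 1171, 940, 932, 557, 143, 291, 1086), (43, 1219, 993, 937, 650, 137, 314, 1141),
    (46, 1264, 1040, 948, 746, 130, 340, 1207), (50, 1320, 1099, 975, 875, 123, 381, 1311),
    (56, 1396, 1179, 1047, 1066, 115, 467, 1495), (64, 1487, 1280, 1200, 1284, 106, 631, 1758),
    (72, 1572, 1373, 1378, 1425, 97, 763, 1983), (84, 1691, 1504, 1585, 1533, 92, 816, 2206),
    (96, 1801, 1623, 1715, 1625, 84, 662, 2363), (112, 1937, 1770, 1859, 1768, 78, 428, 2566),
    (128, 2064, 1906, 1996, 1905, 72, 275, 2760), (144, 2183, 2033, 2124, 2032, 66, 189, 2940),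
    (160, 2296, 2152, 2243, 2151, 62, 142, 3108), (184, 2455, 2320, 2410, 2319, 60, 119, 3345),
    (200, 2556, 2425, 2514, 2424, 55, 105, 3493)]

theorem certifies_nodes₄ : Certifies (3 / 4) (1 / 4) nodes₄ := by
  decide +kernel

end Node

theorem exists_goodTrap_univ {c : ℝ} (hc : c ∈ Icc (-1 / 100) 1) : ∃ t, GoodTrap c t univ := by
  obtain ⟨h₀, h₁⟩ := hc
  have habs : |c| ≤ 1 := abs_le.2 ⟨by linarith, h₁⟩
  rcases le_total c (1 / 10) with h | h
  · exact Node.certifies_nodes₁.exists_goodTrap_univ habs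
      (abs_le.2 ⟨by norm_num; linarith, by norm_num; linarith⟩)
  rcases le_total c (1 / 4) with h | h
  · exact Node.certifies_nodes₂.exists_goodTrap_univ habs
      (abs_le.2 ⟨by norm_num; linarith, by norm_num; linarith⟩)
  rcases le_total c (1 / 2) with h | h
  · exact Node.certifies_nodes₃.exists_goodTrap_univ habs
      (abs_le.2 ⟨by norm_num; linarith, by norm_num; linarith⟩)
  · exact Node.certifies_nodes₄.exists_goodTrap_univ habs
      (abs_le.2 ⟨by norm_num; linarith, by norm_num; linarith⟩)

end Certificate

section AirySolution

/-- A vorticity `w` with derivative `v`, solving the equation `w'' = (L² c + i L³ (y - lam)) w` to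
which the Orr–Sommerfeld equation reduces. -/
structure AirySolution (L c lam : ℝ) (w v : ℝ → ℂ) : Prop where
  continuous : Continuous w
  hasDerivAt : ∀ y ∈ Icc (-1 : ℝ) 1, HasDerivAt w (v y) y
  hasDerivAt_deriv : ∀ y ∈ Icc (-1 : ℝ) 1,
    HasDerivAt v ((L ^ 2 * c + I * L ^ 3 * (y - lam)) * w y) y

namespace AirySolution

variable {L c lam : ℝ} {w v w₁ v₁ w₂ v₂ : ℝ → ℂ}

theorem const_mul_add_const_mul (h₁ : AirySolution L c lam w₁ v₁) (h₂ : AirySolution L c lam w₂ v₂)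
    (a b : ℂ) :
    AirySolution L c lam (fun y ↦ a * w₁ y + b * w₂ y) (fun y ↦ a * v₁ y + b * v₂ y) where
  continuous := (continuous_const.mul h₁.continuous).add (continuous_const.mul h₂.continuous)
  hasDerivAt y hy := ((h₁.hasDerivAt y hy).const_mul a).add ((h₂.hasDerivAt y hy).const_mul b)
  hasDerivAt_deriv y hy := (((h₁.hasDerivAt_deriv y hy).const_mul a).add
    ((h₂.hasDerivAt_deriv y hy).const_mul b)).congr_deriv (by ring)

theorem eq_zero_of_cauchy (h : AirySolution L c lam w v) (hw : w (-1) = 0) (hv : v (-1) = 0) :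
    ∀ y ∈ Icc (-1 : ℝ) 1, w y = 0 := by
  have hcont : Continuous fun y : ℝ ↦ (L ^ 2 * c + I * L ^ 3 * (y - lam) : ℂ) := by fun_prop
  obtain ⟨K, hK⟩ := isCompact_Icc.exists_bound_of_continuousOn (s := Icc (-1 : ℝ) 1)
    hcont.continuousOn
  have energy_nonpos : ∀ y ∈ Icc (-1 : ℝ) 1, ‖w y‖ ^ 2 + ‖v y‖ ^ 2 ≤ 0 := by
    refine fun y hy ↦ nonpos_of_deriv_le_mul_self (f := fun y ↦ ‖w y‖ ^ 2 + ‖v y‖ ^ 2) (K := 1 + K)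
      (fun y hy ↦ (hasDerivAt_norm_sq (h.hasDerivAt y hy)).add
        (hasDerivAt_norm_sq (h.hasDerivAt_deriv y hy))) (by simp [hw, hv]) (fun y hy _ ↦ ?_) hy
    calc _ ≤ 2 * (‖v y‖ * ‖w y‖) + 2 * (K * ‖w y‖ * ‖v y‖) := by
          refine add_le_add ?_ ?_ <;> refine mul_le_mul_of_nonneg_left ?_ zero_le_two
          · exact re_mul_conj_le _ _
          · refine (re_mul_conj_le _ _).trans ?_
            rw [norm_mul]
            gcongr
            exact hK y hy
      _ = (1 + K) * (2 * ‖w y‖ * ‖v y‖) := by ring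
      _ ≤ (1 + K) * (‖w y‖ ^ 2 + ‖v y‖ ^ 2) := by
          have : 0 ≤ K := (norm_nonneg _).trans (hK y hy)
          gcongr
          exact two_mul_le_add_sq _ _
  intro y hy
  have := energy_nonpos y hy
  rw [← norm_eq_zero, ← sq_eq_zero_iff]
  exact le_antisymm (by linarith [sq_nonneg ‖v y‖]) (sq_nonneg _)

theorem exists_cauchy (h₁ : AirySolution L c lam w₁ v₁) (h₂ : AirySolution L c lam w₂ v₂)
    (hind : ∀ a b : ℂ, (∀ y ∈ Icc (-1 : ℝ) 1, a * w₁ y + b * w₂ y = 0) → a = 0 ∧ b = 0) (α β : ℂ) :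
    ∃ a b : ℂ, a * w₁ (-1) + b * w₂ (-1) = α ∧ a * v₁ (-1) + b * v₂ (-1) = β := by
  let T : ℂ × ℂ →ₗ[ℂ] ℂ × ℂ := (LinearMap.toSpanSingleton ℂ (ℂ × ℂ) (w₁ (-1), v₁ (-1))).coprod
    (LinearMap.toSpanSingleton ℂ (ℂ × ℂ) (w₂ (-1), v₂ (-1)))
  have T_apply (a b : ℂ) :
      T (a, b) = (a * w₁ (-1) + b * w₂ (-1), a * v₁ (-1) + b * v₂ (-1)) := by
    simp [T]
  have T_injective : Function.Injective T := by
    rw [← LinearMap.ker_eq_bot, LinearMap.ker_eq_bot']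
    rintro ⟨a, b⟩ hab
    obtain ⟨hw, hv⟩ := Prod.mk_eq_zero.1 ((T_apply a b).symm.trans hab)
    exact Prod.mk_eq_zero.2
      (hind a b ((h₁.const_mul_add_const_mul h₂ a b).eq_zero_of_cauchy hw hv))
  obtain ⟨⟨a, b⟩, hab⟩ := LinearMap.injective_iff_surjective.1 T_injective (α, β)
  rw [T_apply, Prod.mk.injEq] at hab
  exact ⟨a, b, hab⟩

theorem eqOn_of_cauchy (h₁ : AirySolution L c lam w₁ v₁) (h₂ : AirySolution L c lam w₂ v₂)
    (hw : w₁ (-1) = w₂ (-1)) (hv : v₁ (-1) = v₂ (-1)) : EqOn w₁ w₂ (Icc (-1) 1) := by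
  intro y hy
  have := (h₁.const_mul_add_const_mul h₂ 1 (-1)).eq_zero_of_cauchy (by simp [hw]) (by simp [hv])
    y hy
  linear_combination this

theorem airyTriple (h : AirySolution L c lam w v) (hL : 0 < L) {g : ℝ → ℂ}
    (hg : ∀ y ∈ Icc (-1 : ℝ) 1, HasDerivAt g (w y) y) :
    AiryTriple c (L * (-1 - lam)) (L * (1 - lam)) (fun s ↦ L * g (lam + s / L))
      (fun s ↦ w (lam + s / L)) (fun s ↦ v (lam + s / L) / L) := by
  have hLne : (L : ℂ) ≠ 0 := ofReal_ne_zero.2 hL.ne'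
  have hrescale (s : ℝ) : HasDerivAt (fun s ↦ lam + s / L) (1 / L) s :=
    ((hasDerivAt_id s).div_const L).const_add lam
  have hmem {s : ℝ} (hs : s ∈ Icc (L * (-1 - lam)) (L * (1 - lam))) :
      lam + s / L ∈ Icc (-1 : ℝ) 1 :=
    ⟨by linarith [(le_div_iff₀' hL).2 hs.1], by linarith [(div_le_iff₀' hL).2 hs.2]⟩
  refine ⟨fun s hs ↦ ?_, fun s hs ↦ ?_, fun s hs ↦ ?_⟩
  · refine (((hg _ (hmem hs)).scomp s (hrescale s)).const_mul (L : ℂ)).congr_deriv ?_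
    simp [hLne]
  · refine ((h.hasDerivAt _ (hmem hs)).scomp s (hrescale s)).congr_deriv ?_
    simp [div_eq_inv_mul]
  · refine (((h.hasDerivAt_deriv _ (hmem hs)).scomp s (hrescale s)).div_const
      (L : ℂ)).congr_deriv ?_
    simp only [real_smul]
    push_cast
    field_simp
    ring

end AirySolution

end AirySolution

section BoundaryLayer

namespace Tube.Good

variable {t : Tube} {s : ℝ} {G W V : ℂ}

theorem mul_norm_sq_le_re (hMem : t.Mem G W V) :
    (t.p.re - t.σ) * ‖G‖ ^ 2 ≤ (W * conj G).re := by
  have hp := re_mul_mul_conj_self t.p G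
  have hσ := neg_le_re_mul_conj (W - t.p * G) G
  have := mul_le_mul_of_nonneg_right hMem.primitive (norm_nonneg G)
  rw [sub_mul, sub_re] at hσ
  linarith

theorem norm_le_mul_norm (hMem : t.Mem G W V) : ‖W‖ ≤ (‖t.p‖ + t.σ) * ‖G‖ := by
  have := norm_sub_norm_le W (t.p * G)
  rw [norm_mul] at this
  linarith [hMem.primitive]

theorem norm_sq_le_re (h : t.Good s) (hMem : t.Mem G W V) :
    1 / 5 * ‖G‖ ^ 2 ≤ (W * conj G).re :=
  (mul_le_mul_of_nonneg_right h.le_re (sq_nonneg _)).trans (mul_norm_sq_le_re hMem)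

theorem norm_le (h : t.Good s) (hMem : t.Mem G W V) : ‖W‖ ≤ 5 * √(1 + |s|) * ‖G‖ :=
  (norm_le_mul_norm hMem).trans (mul_le_mul_of_nonneg_right h.norm_le_sqrt (norm_nonneg G))

theorem norm_mul_norm_le_re (h : t.Good s) (hMem : t.Mem G W V) :
    ‖W‖ * ‖G‖ ≤ 25 * (W * conj G).re := calc
  ‖W‖ * ‖G‖ ≤ (‖t.p‖ + t.σ) * ‖G‖ * ‖G‖ :=
    mul_le_mul_of_nonneg_right (norm_le_mul_norm hMem) (norm_nonneg G)
  _ ≤ 25 * (t.p.re - t.σ) * ‖G‖ * ‖G‖ := by gcongr; exact h.norm_le_re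
  _ = 25 * ((t.p.re - t.σ) * ‖G‖ ^ 2) := by ring
  _ ≤ 25 * (W * conj G).re := by gcongr; exact mul_norm_sq_le_re hMem

end Tube.Good

theorem norm_le_exp_mul_norm_of_le_re {g V : ℝ → ℂ} {m a b : ℝ} (hab : a ≤ b)
    (hg : ∀ y ∈ Icc a b, HasDerivAt g (V y) y)
    (hm : ∀ y ∈ Icc a b, m * ‖g y‖ ^ 2 ≤ (V y * conj (g y)).re) :
    ‖g a‖ ≤ Real.exp (-(m * (b - a))) * ‖g b‖ := by
  have hderiv (y : ℝ) (hy : y ∈ Icc a b) :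
      HasDerivAt (fun y ↦ Real.exp (2 * m * (b - y)) * ‖g y‖ ^ 2)
        (2 * Real.exp (2 * m * (b - y)) * ((V y * conj (g y)).re - m * ‖g y‖ ^ 2)) y := by
    have := (((hasDerivAt_id y).const_sub b).const_mul (2 * m)).exp
    exact (this.mul (hasDerivAt_norm_sq (hg y hy))).congr_deriv (by simp only [id]; ring)
  have hmono : MonotoneOn (fun y ↦ Real.exp (2 * m * (b - y)) * ‖g y‖ ^ 2) (Icc a b) :=
    monotoneOn_of_hasDerivWithinAt_nonneg (convex_Icc a b)
      (fun y hy ↦ (hderiv y hy).continuousAt.continuousWithinAt)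
      (fun y hy ↦ (hderiv y (interior_subset hy)).hasDerivWithinAt)
      (fun y hy ↦ mul_nonneg (by positivity) (sub_nonneg.2 (hm y (interior_subset hy))))
  have hends : Real.exp (2 * m * (b - a)) * ‖g a‖ ^ 2 ≤ ‖g b‖ ^ 2 := by
    simpa using hmono (left_mem_Icc.2 hab) (right_mem_Icc.2 hab) hab
  rw [Real.exp_neg, ← div_eq_inv_mul, le_div_iff₀' (Real.exp_pos _)]
  refine (sq_le_sq₀ (by positivity) (norm_nonneg _)).1 ?_
  rwa [mul_pow, ← Real.exp_nat_mul, Nat.cast_ofNat, ← mul_assoc]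

theorem integral_norm_deriv_le {g V : ℝ → ℂ} {K a b : ℝ} (hab : a ≤ b)
    (hg : ∀ y ∈ Icc a b, HasDerivAt g (V y) y) (hV : Continuous V) (hne : ∀ y ∈ Icc a b, g y ≠ 0)
    (hK : ∀ y ∈ Icc a b, ‖V y‖ * ‖g y‖ ≤ K * (V y * conj (g y)).re) :
    ∫ y in a..b, ‖V y‖ ≤ K * ‖g b‖ - K * ‖g a‖ := by
  have hnorm (y : ℝ) (hy : y ∈ Icc a b) :
      HasDerivAt (fun y ↦ K * ‖g y‖) (K * ((V y * conj (g y)).re / ‖g y‖)) y := by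
    have hpos := norm_pos_iff.2 (hne y hy)
    have := (hasDerivAt_norm_sq (hg y hy)).sqrt (by positivity)
    simp only [Real.sqrt_sq (norm_nonneg _)] at this
    exact (this.congr_deriv (by field_simp)).const_mul K
  refine intervalIntegral.integral_le_sub_of_hasDeriv_right_of_le hab
    (fun y hy ↦ (hnorm y hy).continuousAt.continuousWithinAt)
    (fun y hy ↦ (hnorm y (Ioo_subset_Icc_self hy)).hasDerivWithinAt)
    (hV.norm.continuousOn.integrableOn_compact isCompact_Icc) (fun y hy ↦ ?_)
  have hy := Ioo_subset_Icc_self hy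
  rw [← mul_div_assoc, le_div_iff₀ (norm_pos_iff.2 (hne y hy))]
  exact hK y hy

/-- `V` has a primitive `g` that grows towards `y = 1` at rate at least `L / 5`, so that `V` is
concentrated near that endpoint. -/
structure BoundaryLayer (L lam : ℝ) (V g : ℝ → ℂ) : Prop where
  hasDerivAt : ∀ y ∈ Icc (-1 : ℝ) 1, HasDerivAt g (V y) y
  ne_zero : ∀ y ∈ Icc (-1 : ℝ) 1, g y ≠ 0
  le_re : ∀ y ∈ Icc (-1 : ℝ) 1, L / 5 * ‖g y‖ ^ 2 ≤ (V y * conj (g y)).re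
  norm_mul_norm_le : ∀ y ∈ Icc (-1 : ℝ) 1, ‖V y‖ * ‖g y‖ ≤ 25 * (V y * conj (g y)).re
  norm_le : ∀ y ∈ Icc (-1 : ℝ) 1, ‖V y‖ ≤ 5 * L * √(1 + L * |y - lam|) * ‖g y‖

namespace BoundaryLayer

variable {L lam : ℝ} {V g : ℝ → ℂ}

theorem const_mul (h : BoundaryLayer L lam V g) {a : ℂ} (ha : a ≠ 0) :
    BoundaryLayer L lam (fun y ↦ a * V y) (fun y ↦ a * g y) := by
  have hre (y : ℝ) : (a * V y * conj (a * g y)).re = ‖a‖ ^ 2 * (V y * conj (g y)).re := by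
    rw [map_mul, mul_mul_mul_comm, mul_conj, re_ofReal_mul, normSq_eq_norm_sq]
  refine ⟨fun y hy ↦ (h.hasDerivAt y hy).const_mul a, fun y hy ↦ mul_ne_zero ha (h.ne_zero y hy),
    fun y hy ↦ ?_, fun y hy ↦ ?_, fun y hy ↦ ?_⟩
  · rw [hre, norm_mul, mul_pow, mul_left_comm]
    gcongr
    exact h.le_re y hy
  · rw [hre, norm_mul, norm_mul, mul_mul_mul_comm, ← sq, mul_left_comm 25]
    exact mul_le_mul_of_nonneg_left (h.norm_mul_norm_le y hy) (sq_nonneg _)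
  · rw [norm_mul, norm_mul, mul_left_comm]
    gcongr
    exact h.norm_le y hy

theorem norm_primitive_le (h : BoundaryLayer L lam V g) (h₁ : g 1 = 1) {y : ℝ}
    (hy : y ∈ Icc (-1 : ℝ) 1) : ‖g y‖ ≤ Real.exp (-(L / 5 * (1 - y))) := by
  have hsub : Icc y 1 ⊆ Icc (-1) 1 := Icc_subset_Icc_left hy.1
  simpa [h₁] using norm_le_exp_mul_norm_of_le_re hy.2 (fun z hz ↦ h.hasDerivAt z (hsub hz))
    (fun z hz ↦ h.le_re z (hsub hz))

theorem norm_le_exp (h : BoundaryLayer L lam V g) (hL : 0 ≤ L) (h₁ : g 1 = 1) {y : ℝ}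
    (hy : y ∈ Icc (-1 : ℝ) 1) :
    ‖V y‖ ≤ 5 * (L * √(1 + L * |y - lam|) * Real.exp (-(L / 5 * (1 - y)))) := by
  refine (h.norm_le y hy).trans ?_
  rw [mul_assoc 5, mul_assoc 5]
  gcongr
  exact h.norm_primitive_le h₁ hy

theorem integral_norm_le (h : BoundaryLayer L lam V g) (hV : Continuous V) (h₁ : g 1 = 1) :
    ∫ y in (-1)..1, ‖V y‖ ≤ 25 := by
  have := integral_norm_deriv_le (by norm_num) h.hasDerivAt hV h.ne_zero h.norm_mul_norm_le
  rw [h₁, norm_one] at this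
  linarith [norm_nonneg (g (-1))]

end BoundaryLayer

theorem AirySolution.boundaryLayer {L c lam : ℝ} (hL : 0 < L) {t : ℝ → Tube}
    (ht : GoodTrap c t univ) {V V' g : ℝ → ℂ} (hV : AirySolution L c lam V V')
    (hg : ∀ y ∈ Icc (-1 : ℝ) 1, HasDerivAt g (V y) y) (hg_ne : g (-1) ≠ 0)
    (hstart : (t (L * (-1 - lam))).Mem (L * g (-1)) (V (-1)) (V' (-1) / L)) :
    BoundaryLayer L lam V g := by
  have hy_eq (y : ℝ) : lam + L * (y - lam) / L = y := by field_simp; ring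
  have hMem (y : ℝ) (hy : y ∈ Icc (-1 : ℝ) 1) :
      (t (L * (y - lam))).Mem (L * g y) (V y) (V' y / L) := by
    have hle₁ : L * (-1 - lam) ≤ L * (y - lam) := by gcongr; exact hy.1
    have hle₂ : L * (y - lam) ≤ L * (1 - lam) := by gcongr; exact hy.2
    have := ht.traps (mem_univ _) (mem_univ _) hle₁ _ _ _
      ((hV.airyTriple hL hg).mono le_rfl hle₂)
    simp only [hy_eq] at this
    exact this hstart
  have hre (y : ℝ) : (V y * conj (L * g y)).re = L * (V y * conj (g y)).re := by
    rw [map_mul, conj_ofReal, mul_left_comm, re_ofReal_mul]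
  have hnorm (y : ℝ) : ‖(L * g y : ℂ)‖ = L * ‖g y‖ := by
    rw [norm_mul, norm_real, Real.norm_of_nonneg hL.le]
  have hle_re (y : ℝ) (hy : y ∈ Icc (-1 : ℝ) 1) :
      L / 5 * ‖g y‖ ^ 2 ≤ (V y * conj (g y)).re := by
    have := (ht.good _ (mem_univ _)).norm_sq_le_re (hMem y hy)
    rw [hre, hnorm] at this
    exact le_of_mul_le_mul_left (by linarith) hL
  refine ⟨hg, fun y hy hgy ↦ hg_ne ?_, hle_re, fun y hy ↦ ?_, fun y hy ↦ ?_⟩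
  · have hsub : Icc (-1) y ⊆ Icc (-1) 1 := Icc_subset_Icc_right hy.2
    simpa [hgy] using norm_le_exp_mul_norm_of_le_re hy.1 (fun z hz ↦ hg z (hsub hz))
      (fun z hz ↦ hle_re z (hsub hz))
  · have := (ht.good _ (mem_univ _)).norm_mul_norm_le_re (hMem y hy)
    rw [hre, hnorm] at this
    exact le_of_mul_le_mul_left (by linarith) hL
  · have := (ht.good _ (mem_univ _)).norm_le (hMem y hy)
    rw [hnorm, abs_mul, abs_of_pos hL] at this
    linarith

theorem AirySolution.exists_boundaryLayer {L c lam : ℝ} {w₁ v₁ w₂ v₂ : ℝ → ℂ} (hL : 0 < L)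
    (hc : c ∈ Icc (-1 / 100) 1) (h₁ : AirySolution L c lam w₁ v₁)
    (h₂ : AirySolution L c lam w₂ v₂)
    (hind : ∀ a b : ℂ, (∀ y ∈ Icc (-1 : ℝ) 1, a * w₁ y + b * w₂ y = 0) → a = 0 ∧ b = 0) :
    ∃ V V' g, AirySolution L c lam V V' ∧ BoundaryLayer L lam V g ∧ g 1 = 1 := by
  have hLne : (L : ℂ) ≠ 0 := ofReal_ne_zero.2 hL.ne'
  obtain ⟨t, ht⟩ := exists_goodTrap_univ hc
  set s := L * (-1 - lam)
  obtain ⟨a, b, hV₀, hV₀'⟩ :=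
    h₁.exists_cauchy h₂ hind (t s).p (L * ((t s).q * (t s).p))
  have hV := h₁.const_mul_add_const_mul h₂ a b
  set V : ℝ → ℂ := fun y ↦ a * w₁ y + b * w₂ y
  set V' : ℝ → ℂ := fun y ↦ a * v₁ y + b * v₂ y
  set g : ℝ → ℂ := fun y ↦ 1 / L + ∫ x in (-1)..y, V x with hg
  have hg₀ : g (-1) = 1 / L := by simp [hg]
  have hgV (y : ℝ) : HasDerivAt g (V y) y :=
    (hV.continuous.integral_hasStrictDerivAt (-1) y).hasDerivAt.const_add _
  have hstart : (t s).Mem (L * g (-1)) (V (-1)) (V' (-1) / L) := by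
    have hV₀ : V (-1) = (t s).p := hV₀
    have hV₀' : V' (-1) = L * ((t s).q * (t s).p) := hV₀'
    rw [hg₀, hV₀, hV₀', mul_one_div_cancel hLne, mul_div_cancel_left₀ _ hLne]
    exact ⟨by simpa using mul_nonneg (ht.good s (mem_univ s)).ρ_nonneg (norm_nonneg _),
      by simpa using (ht.good s (mem_univ s)).σ_nonneg⟩
  have hlayer := hV.boundaryLayer hL ht (fun y _ ↦ hgV y) (by rw [hg₀]; exact one_div_ne_zero hLne)
    hstart
  have hg₁ := hlayer.ne_zero 1 (by norm_num)
  have hnormalized := hV.const_mul_add_const_mul hV (g 1)⁻¹ 0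
  simp only [zero_mul, add_zero] at hnormalized
  exact ⟨_, _, _, hnormalized, hlayer.const_mul (inv_ne_zero hg₁), inv_mul_cancel₀ hg₁⟩

end BoundaryLayer

section ExpMoment

/-- The exponential moment of `w` on `[-1, 1]`, whose weight is normalised to have supremum `1`.
Testing the vorticity of a stream function that vanishes at `±1` against the weights of exponents
`±|k|` extracts the Neumann data of the stream function. -/
noncomputable def expMoment (a : ℝ) (w : ℝ → ℂ) : ℂ :=
  ∫ y in (-1)..1, (Real.exp (a * y - |a|) : ℂ) * w y

variable {a : ℝ} {w w₁ w₂ g V : ℝ → ℂ}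

theorem expMoment_congr (h : EqOn w₁ w₂ (Icc (-1) 1)) : expMoment a w₁ = expMoment a w₂ :=
  intervalIntegral.integral_congr fun y hy ↦ by
    simp only [h (uIcc_of_le (by norm_num : (-1 : ℝ) ≤ 1) ▸ hy)]

theorem expMoment_const_mul_add_const_mul (hw₁ : ContinuousOn w₁ (Icc (-1) 1))
    (hw₂ : ContinuousOn w₂ (Icc (-1) 1)) (α β : ℂ) :
    expMoment a (fun y ↦ α * w₁ y + β * w₂ y) = α * expMoment a w₁ + β * expMoment a w₂ := by
  rw [← uIcc_of_le (by norm_num : (-1 : ℝ) ≤ 1)] at hw₁ hw₂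
  unfold expMoment
  rw [← intervalIntegral.integral_const_mul, ← intervalIntegral.integral_const_mul,
    ← intervalIntegral.integral_add]
  · congr 1 with y
    ring
  all_goals exact ContinuousOn.intervalIntegrable (by fun_prop)

theorem expMoment_deriv (hg : ∀ y ∈ Icc (-1 : ℝ) 1, HasDerivAt g (V y) y)
    (hV : ContinuousOn V (Icc (-1) 1)) :
    expMoment a V =
      Real.exp (a - |a|) * g 1 - Real.exp (-a - |a|) * g (-1) - a * expMoment a g := by
  rw [← uIcc_of_le (by norm_num : (-1 : ℝ) ≤ 1)] at hg hV
  have hexp (y : ℝ) : HasDerivAt (fun y : ℝ ↦ (Real.exp (a * y - |a|) : ℂ))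
      (a * Real.exp (a * y - |a|) : ℝ) y :=
    ((((hasDerivAt_id y).const_mul a).sub_const |a|).exp.congr_deriv
      (by simp [mul_comm])).ofReal_comp
  unfold expMoment
  rw [intervalIntegral.integral_mul_deriv_eq_deriv_mul (fun y _ ↦ hexp y) hg
    (Continuous.intervalIntegrable (by fun_prop) _ _) hV.intervalIntegrable,
    ← intervalIntegral.integral_const_mul]
  simp [mul_assoc]

theorem expMoment_vorticity {φ d : ℝ → ℂ} (hφ : ∀ y ∈ Icc (-1 : ℝ) 1, HasDerivAt φ (d y) y)
    (hd : ∀ y ∈ Icc (-1 : ℝ) 1, HasDerivAt d (w y + a ^ 2 * φ y) y)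
    (hw : ContinuousOn w (Icc (-1) 1)) (hφ_neg : φ (-1) = 0) (hφ_one : φ 1 = 0) :
    expMoment a w = Real.exp (a - |a|) * d 1 - Real.exp (-a - |a|) * d (-1) := by
  have hφ_cont : ContinuousOn φ (Icc (-1) 1) := fun y hy ↦
    (hφ y hy).continuousAt.continuousWithinAt
  have hd_cont : ContinuousOn d (Icc (-1) 1) := fun y hy ↦
    (hd y hy).continuousAt.continuousWithinAt
  have hφ_parts := expMoment_deriv (a := a) hφ hd_cont
  have hd_parts := expMoment_deriv (a := a) hd (by fun_prop)
  have hsplit := expMoment_const_mul_add_const_mul (a := a) hw hφ_cont 1 (a ^ 2)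
  simp only [one_mul] at hsplit
  rw [hφ_neg, hφ_one] at hφ_parts
  linear_combination hd_parts - hsplit - a * hφ_parts

theorem norm_expMoment_le_of_norm_le_exp {m : ℝ} (ham : a + m ≠ 0)
    (hg : ∀ y ∈ Icc (-1 : ℝ) 1, ‖g y‖ ≤ Real.exp (-(m * (1 - y)))) :
    ‖expMoment a g‖ ≤ (Real.exp (a - |a|) - Real.exp (-a - |a| - 2 * m)) / (a + m) := calc
  ‖expMoment a g‖ ≤ ∫ y in (-1)..1, Real.exp ((a + m) * y + (-|a| - m)) := by
    refine intervalIntegral.norm_integral_le_of_norm_le (by norm_num)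
      (.of_forall fun y hy ↦ ?_) (Continuous.intervalIntegrable (by fun_prop) _ _)
    rw [norm_mul, norm_real, Real.norm_of_nonneg (Real.exp_pos _).le,
      show (a + m) * y + (-|a| - m) = a * y - |a| + -(m * (1 - y)) by ring, Real.exp_add]
    gcongr
    exact hg y (Ioc_subset_Icc_self hy)
  _ = (Real.exp (a - |a|) - Real.exp (-a - |a| - 2 * m)) / (a + m) := by
    rw [intervalIntegral.integral_comp_mul_add (fun x ↦ Real.exp x) ham, integral_exp, smul_eq_mul,
      div_eq_inv_mul]
    ring_nf

end ExpMoment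

section Reflection

/-- The reflection that exchanges the two endpoints. The conjugation compensates the sign change
of the shear, so that `reflect` maps the equation with parameter `lam` to that with `-lam`; the sign
makes it exchange the Neumann data of the stream functions without changing them. -/
noncomputable def reflect (w : ℝ → ℂ) (y : ℝ) : ℂ := -conj (w (-y))

theorem neg_mem_Icc_neg_one_one {y : ℝ} (hy : y ∈ Icc (-1 : ℝ) 1) : -y ∈ Icc (-1 : ℝ) 1 :=
  ⟨by linarith [hy.2], by linarith [hy.1]⟩

theorem norm_reflect (w : ℝ → ℂ) (y : ℝ) : ‖reflect w y‖ = ‖w (-y)‖ := by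
  rw [reflect, norm_neg, RCLike.norm_conj]

theorem expMoment_reflect (a : ℝ) (w : ℝ → ℂ) :
    expMoment a (reflect w) = -conj (expMoment (-a) w) := by
  have hneg := intervalIntegral.integral_comp_neg (a := -1) (b := 1)
    (fun y ↦ conj ((Real.exp (-a * y - |a|) : ℂ) * w y))
  rw [neg_neg] at hneg
  simp only [expMoment, reflect, abs_neg]
  rw [← intervalIntegral.intervalIntegral_conj, ← hneg]
  simp only [map_mul, conj_ofReal, mul_neg, neg_mul, neg_neg,
    intervalIntegral.integral_neg]

theorem integral_norm_reflect (w : ℝ → ℂ) :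
    ∫ y in (-1)..1, ‖reflect w y‖ = ∫ y in (-1)..1, ‖w y‖ := by
  simp only [norm_reflect]
  simpa using intervalIntegral.integral_comp_neg (a := -1) (b := 1) (fun y ↦ ‖w y‖)

theorem AirySolution.reflect {L c lam : ℝ} {w v : ℝ → ℂ} (h : AirySolution L c lam w v) :
    AirySolution L c (-lam) (reflect w) (fun y ↦ -reflect v y) where
  continuous := (continuous_conj.comp (h.continuous.comp continuous_neg)).neg
  hasDerivAt y hy := ((h.hasDerivAt _ (neg_mem_Icc_neg_one_one hy)).scomp y
    (hasDerivAt_neg y)).star.neg.congr_deriv (by simp [OrrSommerfeld.reflect])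
  hasDerivAt_deriv y hy := ((h.hasDerivAt_deriv _ (neg_mem_Icc_neg_one_one hy)).scomp y
    (hasDerivAt_neg y)).star.neg.neg.congr_deriv (by
      simp only [OrrSommerfeld.reflect, ofReal_neg, map_mul, map_add, map_sub, map_neg, map_pow,
        conj_I, conj_ofReal, neg_smul, one_smul, neg_neg, neg_mul, mul_neg, star_def]
      ring)

end Reflection

section LayerMoments

variable {k m : ℝ} {V g : ℝ → ℂ}

theorem le_norm_expMoment_of_norm_primitive_le_exp (hk : 0 < k) (hm : 0 < m)
    (hg : ∀ y ∈ Icc (-1 : ℝ) 1, HasDerivAt g (V y) y) (hV : ContinuousOn V (Icc (-1) 1))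
    (h₁ : g 1 = 1) (hdecay : ∀ y ∈ Icc (-1 : ℝ) 1, ‖g y‖ ≤ Real.exp (-(m * (1 - y)))) :
    (1 - Real.exp (-(2 * (k + m)))) * (m / (k + m)) ≤ ‖expMoment k V‖ := by
  set E := Real.exp (-(2 * (k + m))) with hE
  have hparts := expMoment_deriv (a := k) hg hV
  have hmoment := norm_expMoment_le_of_norm_le_exp (add_pos hk hm).ne' hdecay
  rw [abs_of_pos hk, sub_self, Real.exp_zero,
    show -k - k - 2 * m = -(2 * (k + m)) by ring, ← hE] at hmoment
  rw [abs_of_pos hk, sub_self, Real.exp_zero, h₁, ofReal_one, one_mul, sub_sub] at hparts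
  have hleft : ‖(Real.exp (-k - k) : ℂ) * g (-1)‖ ≤ E := by
    rw [norm_mul, norm_real, Real.norm_of_nonneg (Real.exp_pos _).le]
    refine (mul_le_mul_of_nonneg_left (hdecay (-1) (by simp)) (Real.exp_pos _).le).trans_eq ?_
    rw [← Real.exp_add, hE]
    ring_nf
  have hright : ‖(k : ℂ) * expMoment k g‖ ≤ k * ((1 - E) / (k + m)) := by
    rw [norm_mul, norm_real, Real.norm_of_nonneg hk.le]
    gcongr
  calc (1 - E) * (m / (k + m)) = 1 - (E + k * ((1 - E) / (k + m))) := by field_simp; ring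
    _ ≤ ‖(1 : ℂ)‖ - ‖(Real.exp (-k - k) : ℂ) * g (-1) + k * expMoment k g‖ := by
      rw [norm_one]
      gcongr
      exact (norm_add_le _ _).trans (add_le_add hleft hright)
    _ ≤ ‖expMoment k V‖ := hparts ▸ norm_sub_norm_le _ _

theorem norm_expMoment_neg_le_of_norm_primitive_le_exp (hk : 0 < k) (hmk : m ≠ k)
    (hg : ∀ y ∈ Icc (-1 : ℝ) 1, HasDerivAt g (V y) y) (hV : ContinuousOn V (Icc (-1) 1))
    (h₁ : g 1 = 1) (hdecay : ∀ y ∈ Icc (-1 : ℝ) 1, ‖g y‖ ≤ Real.exp (-(m * (1 - y)))) :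
    ‖expMoment (-k) V‖ ≤ Real.exp (-(2 * k)) + Real.exp (-(2 * m)) +
      k * ((Real.exp (-(2 * k)) - Real.exp (-(2 * m))) / (m - k)) := by
  have hparts := expMoment_deriv (a := -k) hg hV
  have hne : -k + m ≠ 0 := by rwa [neg_add_eq_sub, sub_ne_zero]
  have hmoment := norm_expMoment_le_of_norm_le_exp hne hdecay
  rw [abs_neg, abs_of_pos hk, neg_neg, sub_self, zero_sub, ← neg_add', ← two_mul,
    neg_add_eq_sub] at hmoment
  rw [abs_neg, abs_of_pos hk, neg_neg, sub_self, Real.exp_zero, h₁, mul_one, ofReal_one, one_mul,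
    ← neg_add', ← two_mul] at hparts
  rw [hparts]
  refine (norm_sub_le _ _).trans (add_le_add ((norm_sub_le _ _).trans (add_le_add ?_ ?_)) ?_)
  · rw [norm_real, Real.norm_of_nonneg (Real.exp_pos _).le]
  · simpa [show m * (1 + 1) = 2 * m by ring] using hdecay (-1) (by simp)
  · rw [norm_mul, norm_real, norm_neg, Real.norm_of_nonneg hk.le]
    gcongr

theorem exp_neg_two_fifths_le : Real.exp (-(2 / 5)) ≤ 0.6711 := by
  have hpow : Real.exp (-(2 / 5)) ^ 5 * Real.exp 1 ^ 2 = 1 := by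
    rw [← Real.exp_nat_mul, ← Real.exp_nat_mul, ← Real.exp_add]
    norm_num
  by_contra! h
  have hpow_gt : (0.6711 : ℝ) ^ 5 * 2.718 ^ 2 < Real.exp (-(2 / 5)) ^ 5 * Real.exp 1 ^ 2 := by
    gcongr
    linarith [Real.exp_one_gt_d9]
  rw [hpow] at hpow_gt
  norm_num at hpow_gt

/-- The numerical properties of the moments `A`, `B` of a boundary layer against the weights that
are largest at its own endpoint and at the opposite one; `x` is the decay of the layer across the
channel. -/
structure LayerMoments (x : ℝ) (A B : ℂ) : Prop where
  le_norm : 3 / 20 ≤ ‖A‖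
  norm_opposite_le : ‖B‖ ≤ 9 / 10 * ‖A‖
  norm_opposite_le_decay : ‖B‖ ≤ 6 * x

theorem exp_neg_eq_pow (n : ℕ) {t : ℝ} (ht : t = n * (2 / 5 * k)) :
    Real.exp (-t) = Real.exp (-(2 / 5 * k)) ^ n := by
  rw [← Real.exp_nat_mul, ht, mul_neg]

theorem layerMoments_of_fast_decay (hk : 1 ≤ k)
    (hg : ∀ y ∈ Icc (-1 : ℝ) 1, HasDerivAt g (V y) y) (hV : ContinuousOn V (Icc (-1) 1))
    (h₁ : g 1 = 1) (hdecay : ∀ y ∈ Icc (-1 : ℝ) 1, ‖g y‖ ≤ Real.exp (-(6 / 5 * k * (1 - y)))) :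
    LayerMoments (Real.exp (-(2 / 5 * k))) (expMoment k V) (expMoment (-k) V) := by
  have hk₀ : 0 < k := by linarith
  have hlower := le_norm_expMoment_of_norm_primitive_le_exp hk₀ (by positivity) hg hV h₁ hdecay
  have hupper := norm_expMoment_neg_le_of_norm_primitive_le_exp hk₀ (by linarith) hg hV h₁
    hdecay
  rw [show 6 / 5 * k / (k + 6 / 5 * k) = 6 / 11 by field_simp; norm_num,
    exp_neg_eq_pow (k := k) 11 (by push_cast; ring)] at hlower
  rw [exp_neg_eq_pow (k := k) (t := 2 * k) 5 (by push_cast; ring),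
    exp_neg_eq_pow (k := k) (t := 2 * (6 / 5 * k)) 6 (by push_cast; ring)] at hupper
  set x := Real.exp (-(2 / 5 * k))
  have hx₀ : 0 < x := Real.exp_pos _
  have hx : x ≤ 0.6711 :=
    (Real.exp_le_exp.2 (by linarith)).trans exp_neg_two_fifths_le
  have hB : ‖expMoment (-k) V‖ ≤ x ^ 4 * (x * (6 - 4 * x)) :=
    hupper.trans_eq (by field_simp; ring)
  have hx_mul : x * (6 - 4 * x) ≤ 2.226 := by nlinarith
  have hx_mul₀ : 0 ≤ x * (6 - 4 * x) := mul_nonneg hx₀.le (by linarith)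
  have hA_lower : 0.53 ≤ ‖expMoment k V‖ := by
    have : x ^ 11 ≤ 0.6711 ^ 11 := by gcongr
    norm_num at this ⊢
    linarith
  have hB_upper : ‖expMoment (-k) V‖ ≤ 0.46 := calc
    _ ≤ (0.6711 : ℝ) ^ 4 * 2.226 := hB.trans (by gcongr)
    _ ≤ 0.46 := by norm_num
  refine ⟨by linarith, by linarith, hB.trans ?_⟩
  calc x ^ 4 * (x * (6 - 4 * x)) ≤ 1 * (x * (6 - 4 * x)) := by
        gcongr
        exact pow_le_one₀ hx₀.le (by linarith)
    _ ≤ 6 * x := by linarith [sq_nonneg x]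

theorem layerMoments_of_large_wavenumber (hk : 8 ≤ k)
    (hg : ∀ y ∈ Icc (-1 : ℝ) 1, HasDerivAt g (V y) y) (hV : ContinuousOn V (Icc (-1) 1))
    (h₁ : g 1 = 1) (hdecay : ∀ y ∈ Icc (-1 : ℝ) 1, ‖g y‖ ≤ Real.exp (-(1 / 5 * k * (1 - y)))) :
    LayerMoments (Real.exp (-(2 / 5 * k))) (expMoment k V) (expMoment (-k) V) := by
  have hk₀ : 0 < k := by linarith
  have hlower := le_norm_expMoment_of_norm_primitive_le_exp hk₀ (by positivity) hg hV h₁ hdecay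
  have hupper := norm_expMoment_neg_le_of_norm_primitive_le_exp hk₀ (by linarith) hg hV h₁
    hdecay
  rw [show 1 / 5 * k / (k + 1 / 5 * k) = 1 / 6 by field_simp; norm_num,
    exp_neg_eq_pow (k := k) 6 (by push_cast; ring)] at hlower
  rw [exp_neg_eq_pow (k := k) (t := 2 * k) 5 (by push_cast; ring),
    exp_neg_eq_pow (k := k) (t := 2 * (1 / 5 * k)) 1 (by push_cast; ring)] at hupper
  set x := Real.exp (-(2 / 5 * k))
  have hx₀ : 0 < x := Real.exp_pos _
  have hx : x ≤ 0.0412 := calc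
    x ≤ Real.exp (-(2 / 5)) ^ 8 := by
      rw [← Real.exp_nat_mul]
      exact Real.exp_le_exp.2 (by push_cast; linarith)
    _ ≤ (0.6711 : ℝ) ^ 8 := by
      gcongr
      exact exp_neg_two_fifths_le
    _ ≤ 0.0412 := by norm_num
  have hA_lower : 3 / 20 ≤ ‖expMoment k V‖ := by
    have : x ^ 6 ≤ 0.0412 ^ 6 := by gcongr
    norm_num at this
    linarith
  have hB : ‖expMoment (-k) V‖ ≤ 9 / 4 * x := calc
    _ ≤ 9 / 4 * x - x ^ 5 / 4 := hupper.trans_eq (by field_simp; ring)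
    _ ≤ 9 / 4 * x := sub_le_self _ (by positivity)
  exact ⟨hA_lower, by linarith, by linarith⟩

theorem BoundaryLayer.layerMoments {L lam : ℝ} (h : BoundaryLayer L lam V g)
    (hV : ContinuousOn V (Icc (-1) 1)) (h₁ : g 1 = 1) (hk : 1 ≤ k) (hkL : k ≤ L)
    (hcase : 6 * k ≤ L ∨ 8 ≤ k) :
    LayerMoments (Real.exp (-(2 / 5 * k))) (expMoment k V) (expMoment (-k) V) := by
  have hdecay {m : ℝ} (hm : m ≤ L / 5) (y : ℝ) (hy : y ∈ Icc (-1 : ℝ) 1) :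
      ‖g y‖ ≤ Real.exp (-(m * (1 - y))) := by
    refine (h.norm_primitive_le h₁ hy).trans (Real.exp_le_exp.2 (neg_le_neg ?_))
    exact mul_le_mul_of_nonneg_right hm (sub_nonneg.2 hy.2)
  rcases hcase with h6 | h8
  · exact layerMoments_of_fast_decay hk h.hasDerivAt hV h₁ (hdecay (by linarith))
  · exact layerMoments_of_large_wavenumber h8 h.hasDerivAt hV h₁ (hdecay (by linarith))

end LayerMoments

theorem LayerMoments.neg_conj {x : ℝ} {A B : ℂ} (h : LayerMoments x A B) :
    LayerMoments x (-conj A) (-conj B) := by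
  constructor <;> simp only [norm_neg, RCLike.norm_conj]
  exacts [h.le_norm, h.norm_opposite_le, h.norm_opposite_le_decay]

theorem LayerMoments.le_norm_det {x₁ x₂ : ℝ} {A₁ B₁ A₂ B₂ : ℂ} (h₁ : LayerMoments x₁ A₁ B₁)
    (h₂ : LayerMoments x₂ A₂ B₂) : 19 / 100 * (‖A₁‖ * ‖A₂‖) ≤ ‖A₁ * A₂ - B₁ * B₂‖ := calc
  _ = ‖A₁‖ * ‖A₂‖ - 9 / 10 * ‖A₁‖ * (9 / 10 * ‖A₂‖) := by ring
  _ ≤ ‖A₁‖ * ‖A₂‖ - ‖B₁‖ * ‖B₂‖ := by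
    gcongr
    exacts [h₁.norm_opposite_le, h₂.norm_opposite_le]
  _ ≤ ‖A₁ * A₂ - B₁ * B₂‖ := by
    rw [← norm_mul, ← norm_mul]
    exact norm_sub_norm_le _ _

theorem LayerMoments.exists_combination {x : ℝ} {A₁ B₁ A₂ B₂ E : ℂ} (h₁ : LayerMoments x A₁ B₁)
    (h₂ : LayerMoments x A₂ B₂) (hE : ‖E‖ ≤ x) (hx : x ≤ 1) :
    ∃ α β : ℂ, α * A₁ + β * B₂ = 1 ∧ α * B₁ + β * A₂ = E ∧ ‖α‖ ≤ 70 ∧ ‖β‖ ≤ 1500 * x := by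
  have hx₀ : 0 ≤ x := (norm_nonneg E).trans hE
  have hdet := h₁.le_norm_det h₂
  have hA₁ := h₁.le_norm
  have hA₂ := h₂.le_norm
  have hdet_pos : 0 < ‖A₁ * A₂ - B₁ * B₂‖ := by
    refine lt_of_lt_of_le ?_ hdet
    have := mul_pos (show 0 < ‖A₁‖ by linarith) (show 0 < ‖A₂‖ by linarith)
    linarith
  have hne := norm_pos_iff.1 hdet_pos
  refine ⟨(A₂ - B₂ * E) / (A₁ * A₂ - B₁ * B₂), (A₁ * E - B₁) / (A₁ * A₂ - B₁ * B₂),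
    ?_, ?_, ?_, ?_⟩
  · rw [div_mul_eq_mul_div, div_mul_eq_mul_div, ← add_div, div_eq_iff hne]
    ring
  · rw [div_mul_eq_mul_div, div_mul_eq_mul_div, ← add_div, div_eq_iff hne]
    ring
  · rw [norm_div, div_le_iff₀ hdet_pos]
    calc ‖A₂ - B₂ * E‖ ≤ ‖A₂‖ + 9 / 10 * ‖A₂‖ * 1 := by
          refine (norm_sub_le _ _).trans (add_le_add_right ?_ _)
          rw [norm_mul]
          gcongr
          exacts [h₂.norm_opposite_le, hE.trans hx]
      _ ≤ 70 * (19 / 100 * (‖A₁‖ * ‖A₂‖)) := by nlinarith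
      _ ≤ 70 * ‖A₁ * A₂ - B₁ * B₂‖ := by gcongr
  · rw [norm_div, div_le_iff₀ hdet_pos]
    calc ‖A₁ * E - B₁‖ ≤ ‖A₁‖ * x + 6 * x * 1 := by
          refine (norm_sub_le _ _).trans (add_le_add ?_ ?_)
          · rw [norm_mul]
            gcongr
          · linarith [h₁.norm_opposite_le_decay]
      _ ≤ ‖A₁‖ * x + 6 * x * (20 / 3 * ‖A₁‖) := by
          gcongr
          linarith
      _ ≤ 1500 * x * (19 / 100 * (‖A₁‖ * (3 / 20))) := by
          linarith [mul_nonneg (norm_nonneg A₁) hx₀]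
      _ ≤ 1500 * x * ‖A₁ * A₂ - B₁ * B₂‖ := by
          gcongr
          exact le_trans (by gcongr) hdet

section SupBounds

variable {L k lam y : ℝ}

theorem mul_sqrt_mul_exp_le (hk : 0 < k) (hkL : k ≤ L) (hy : y ≤ 1) :
    L * √(1 + L * |y - lam|) * Real.exp (-(L / 5 * (1 - y))) ≤
      3 * √(L ^ 3 / k + L ^ 3 * |1 - lam|) := by
  have hL : 0 < L := hk.trans_le hkL
  set z := L * (1 - y) with hz
  have hz₀ : 0 ≤ z := mul_nonneg hL.le (sub_nonneg.2 hy)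
  have hdist : 1 + L * |y - lam| ≤ (1 + L * |1 - lam|) * (1 + z) := by
    have htri : |y - lam| ≤ (1 - y) + |1 - lam| := by
      simpa only [abs_sub_comm y 1, abs_of_nonneg (sub_nonneg.2 hy)] using abs_sub_le y 1 lam
    have hprod : 0 ≤ L * |1 - lam| * z := by positivity
    nlinarith
  have hdecay : (1 + z) * Real.exp (-(z / 5)) ^ 2 ≤ 3 ^ 2 := by
    have hexp : Real.exp (-(z / 5)) ≤ 1 := Real.exp_le_one_iff.2 (by linarith)
    have hmul : (1 + z / 5) * Real.exp (-(z / 5)) ≤ 1 := by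
      rw [Real.exp_neg, ← div_eq_mul_inv, div_le_one (Real.exp_pos _)]
      linarith [Real.add_one_le_exp (z / 5)]
    nlinarith [Real.exp_pos (-(z / 5))]
  have hrate : L / 5 * (1 - y) = z / 5 := by rw [hz]; ring
  have hpow : L ^ 2 ≤ L ^ 3 / k := by
    rw [le_div_iff₀ hk, pow_succ L 2]
    gcongr
  rw [hrate]
  refine abs_le_of_sq_le_sq' ?_ (by positivity) |>.2
  rw [mul_pow, mul_pow, mul_pow, Real.sq_sqrt (by positivity), Real.sq_sqrt (by positivity)]
  calc L ^ 2 * (1 + L * |y - lam|) * Real.exp (-(z / 5)) ^ 2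
      ≤ L ^ 2 * ((1 + L * |1 - lam|) * (1 + z)) * Real.exp (-(z / 5)) ^ 2 := by gcongr
    _ = (L ^ 2 + L ^ 3 * |1 - lam|) * ((1 + z) * Real.exp (-(z / 5)) ^ 2) := by ring
    _ ≤ (L ^ 3 / k + L ^ 3 * |1 - lam|) * 3 ^ 2 := by gcongr
    _ = 3 ^ 2 * (L ^ 3 / k + L ^ 3 * |1 - lam|) := mul_comm _ _

theorem exp_mul_mul_sqrt_le (hk : 1 ≤ k) (hkL : k ≤ L) (hy : y ∈ Icc (-1 : ℝ) 1) :
    Real.exp (-(2 / 5 * k)) * (L * √(1 + L * |y - lam|)) ≤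
      2 * √(L ^ 3 / k + L ^ 3 * |1 - lam|) := by
  have : 0 < k := by linarith
  have hL : 1 ≤ L := hk.trans hkL
  have hdist : 1 + L * |y - lam| ≤ 3 * L + L * |1 - lam| := by
    have htri : |y - lam| ≤ 2 + |1 - lam| := by
      refine (abs_sub_le y 1 lam).trans (add_le_add_left ?_ _)
      rw [abs_sub_comm, abs_of_nonneg (sub_nonneg.2 hy.2)]
      linarith [hy.1]
    nlinarith
  have hdecay : Real.exp (-(2 / 5 * k)) ^ 2 * (3 * k) ≤ 2 ^ 2 := by
    have hmul : (4 / 5 * k + 1) * Real.exp (-(4 / 5 * k)) ≤ 1 := by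
      rw [Real.exp_neg, ← div_eq_mul_inv, div_le_one (Real.exp_pos _)]
      exact Real.add_one_le_exp _
    rw [← Real.exp_nat_mul, show ((2 : ℕ) : ℝ) * -(2 / 5 * k) = -(4 / 5 * k) by push_cast; ring]
    linarith [Real.exp_pos (-(4 / 5 * k))]
  refine abs_le_of_sq_le_sq' ?_ (by positivity) |>.2
  rw [mul_pow, mul_pow, mul_pow, Real.sq_sqrt (by positivity), Real.sq_sqrt (by positivity)]
  calc Real.exp (-(2 / 5 * k)) ^ 2 * (L ^ 2 * (1 + L * |y - lam|))
      ≤ Real.exp (-(2 / 5 * k)) ^ 2 * (L ^ 2 * (3 * L + L * |1 - lam|)) := by gcongr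
    _ ≤ Real.exp (-(2 / 5 * k)) ^ 2 * (L ^ 2 * (3 * L + 3 * k * (L * |1 - lam|))) := by
      have : L * |1 - lam| ≤ 3 * k * (L * |1 - lam|) :=
        le_mul_of_one_le_left (by positivity) (by linarith)
      gcongr
    _ = Real.exp (-(2 / 5 * k)) ^ 2 * (3 * k) * (L ^ 3 / k + L ^ 3 * |1 - lam|) := by
      field_simp
    _ ≤ 2 ^ 2 * (L ^ 3 / k + L ^ 3 * |1 - lam|) := by gcongr

end SupBounds

section MomentPair

/-- Two vorticities with the moments dictated by the boundary data of the two Orr–Sommerfeld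
solutions: the stream functions vanish at `±1` and have unit Neumann data at `1` and at `-1`,
respectively. -/
structure MomentPair (L c lam k : ℝ) (w₁ v₁ w₂ v₂ : ℝ → ℂ) : Prop where
  airySolution₁ : AirySolution L c lam w₁ v₁
  airySolution₂ : AirySolution L c lam w₂ v₂
  expMoment₁ : expMoment k w₁ = 1
  expMoment_neg₁ : expMoment (-k) w₁ = Real.exp (-(2 * k))
  expMoment₂ : expMoment k w₂ = -Real.exp (-(2 * k))
  expMoment_neg₂ : expMoment (-k) w₂ = -1

namespace MomentPair

variable {L c lam k : ℝ} {w₁ v₁ w₂ v₂ : ℝ → ℂ}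

theorem reflect (h : MomentPair L c lam k w₁ v₁ w₂ v₂) :
    MomentPair L c (-lam) k (reflect w₂) (fun y ↦ -reflect v₂ y) (reflect w₁)
      (fun y ↦ -reflect v₁ y) where
  airySolution₁ := h.airySolution₂.reflect
  airySolution₂ := h.airySolution₁.reflect
  expMoment₁ := by simp [expMoment_reflect, h.expMoment_neg₂]
  expMoment_neg₁ := by rw [expMoment_reflect, neg_neg, h.expMoment₂, map_neg, conj_ofReal, neg_neg]
  expMoment₂ := by rw [expMoment_reflect, h.expMoment_neg₁, conj_ofReal]
  expMoment_neg₂ := by simp [expMoment_reflect, h.expMoment₁]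

theorem eq_zero_of_expMoment_eq_zero (h : MomentPair L c lam k w₁ v₁ w₂ v₂) (hk : 0 < k) {a b : ℂ}
    (hpos : expMoment k (fun y ↦ a * w₁ y + b * w₂ y) = 0)
    (hneg : expMoment (-k) (fun y ↦ a * w₁ y + b * w₂ y) = 0) : a = 0 ∧ b = 0 := by
  rw [expMoment_const_mul_add_const_mul h.airySolution₁.continuous.continuousOn
    h.airySolution₂.continuous.continuousOn] at hpos hneg
  rw [h.expMoment₁, h.expMoment₂] at hpos
  rw [h.expMoment_neg₁, h.expMoment_neg₂] at hneg
  set E := Real.exp (-(2 * k))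
  have hE₀ : 0 < E := Real.exp_pos _
  have hE₁ : E < 1 := Real.exp_lt_one_iff.2 (by linarith)
  have hne : (1 - (E : ℂ) ^ 2) ≠ 0 := by
    have : (1 - E ^ 2) ≠ 0 := by nlinarith
    exact_mod_cast this
  have hmul : b * (1 - (E : ℂ) ^ 2) = 0 := by linear_combination E * hpos - hneg
  have hb : b = 0 := (mul_eq_zero.1 hmul).resolve_right hne
  exact ⟨by simpa [hb] using hpos, hb⟩

theorem linearIndependent (h : MomentPair L c lam k w₁ v₁ w₂ v₂) (hk : 0 < k) (a b : ℂ)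
    (hab : ∀ y ∈ Icc (-1 : ℝ) 1, a * w₁ y + b * w₂ y = 0) : a = 0 ∧ b = 0 := by
  have hmoment (r : ℝ) : expMoment r (fun y ↦ a * w₁ y + b * w₂ y) = 0 := by
    rw [expMoment_congr (w₂ := fun _ ↦ 0) hab]
    simp [expMoment]
  exact h.eq_zero_of_expMoment_eq_zero hk (hmoment k) (hmoment (-k))

theorem eqOn_of_expMoment_eq (h : MomentPair L c lam k w₁ v₁ w₂ v₂) (hk : 0 < k)
    {w v w' v' : ℝ → ℂ} (hw : AirySolution L c lam w v) (hw' : AirySolution L c lam w' v')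
    (hpos : expMoment k w = expMoment k w') (hneg : expMoment (-k) w = expMoment (-k) w') :
    EqOn w w' (Icc (-1) 1) := by
  have hdiff := hw.const_mul_add_const_mul hw' 1 (-1)
  obtain ⟨a, b, ha, hb⟩ := h.airySolution₁.exists_cauchy h.airySolution₂
    (h.linearIndependent hk) (1 * w (-1) + -1 * w' (-1)) (1 * v (-1) + -1 * v' (-1))
  have hcomb := (h.airySolution₁.const_mul_add_const_mul h.airySolution₂ a b).eqOn_of_cauchy hdiff
    ha hb
  have hmoment {r : ℝ} (hr : expMoment r w = expMoment r w') :
      expMoment r (fun y ↦ a * w₁ y + b * w₂ y) = 0 := by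
    rw [expMoment_congr hcomb, expMoment_const_mul_add_const_mul hw.continuous.continuousOn
      hw'.continuous.continuousOn, hr]
    ring
  obtain ⟨rfl, rfl⟩ := h.eq_zero_of_expMoment_eq_zero hk (hmoment hpos) (hmoment hneg)
  exact fun y hy ↦ by linear_combination -hcomb hy

theorem exists_boundaryLayer (h : MomentPair L c lam k w₁ v₁ w₂ v₂) (hk : 1 ≤ k) (hkL : k ≤ L)
    (hcase : 6 * k ≤ L ∨ 8 ≤ k) (hc : c ∈ Icc (-1 / 100) 1) :
    ∃ V V' g, AirySolution L c lam V V' ∧ BoundaryLayer L lam V g ∧ g 1 = 1 ∧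
      LayerMoments (Real.exp (-(2 / 5 * k))) (expMoment k V) (expMoment (-k) V) := by
  obtain ⟨V, V', g, hV, hlayer, hg⟩ := h.airySolution₁.exists_boundaryLayer
    (by linarith) hc h.airySolution₂ (h.linearIndependent (by linarith))
  exact ⟨V, V', g, hV, hlayer, hg, hlayer.layerMoments hV.continuous.continuousOn hg hk hkL hcase⟩

theorem exists_eqOn_boundaryLayers (h : MomentPair L c lam k w₁ v₁ w₂ v₂) (hk : 1 ≤ k)
    (hkL : k ≤ L) (hcase : 6 * k ≤ L ∨ 8 ≤ k) (hc : c ∈ Icc (-1 / 100) 1) :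
    ∃ (V g U f : ℝ → ℂ) (α β : ℂ), Continuous V ∧ BoundaryLayer L lam V g ∧ g 1 = 1 ∧
      Continuous U ∧ BoundaryLayer L (-lam) U f ∧ f 1 = 1 ∧
      ‖α‖ ≤ 70 ∧ ‖β‖ ≤ 1500 * Real.exp (-(2 / 5 * k)) ∧
      EqOn w₁ (fun y ↦ α * V y + β * OrrSommerfeld.reflect U y) (Icc (-1) 1) := by
  obtain ⟨V, V', g, hV, hV_layer, hg, hV_moments⟩ := h.exists_boundaryLayer hk hkL hcase hc
  obtain ⟨U, U', f, hU, hU_layer, hf, hU_moments⟩ := h.reflect.exists_boundaryLayer hk hkL hcase hc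
  have hR : AirySolution L c lam _ _ := neg_neg lam ▸ hU.reflect
  have hE : ‖(Real.exp (-(2 * k)) : ℂ)‖ ≤ Real.exp (-(2 / 5 * k)) := by
    rw [norm_real, Real.norm_of_nonneg (Real.exp_pos _).le]
    exact Real.exp_le_exp.2 (by linarith)
  obtain ⟨α, β, hpos, hneg, hα, hβ⟩ := hV_moments.exists_combination hU_moments.neg_conj hE
    (Real.exp_le_one_iff.2 (by linarith))
  refine ⟨V, g, U, f, α, β, hV.continuous, hV_layer, hg, hU.continuous, hU_layer, hf, hα, hβ, ?_⟩
  have hcomb := hV.const_mul_add_const_mul hR α β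
  refine h.eqOn_of_expMoment_eq (by linarith) h.airySolution₁ hcomb ?_ ?_ <;>
    rw [expMoment_const_mul_add_const_mul hV.continuous.continuousOn hR.continuous.continuousOn,
      expMoment_reflect]
  · rw [h.expMoment₁, hpos]
  · rw [h.expMoment_neg₁, neg_neg, hneg]

theorem integral_norm_le (h : MomentPair L c lam k w₁ v₁ w₂ v₂) (hk : 1 ≤ k) (hkL : k ≤ L)
    (hcase : 6 * k ≤ L ∨ 8 ≤ k) (hc : c ∈ Icc (-1 / 100) 1) :
    ∫ y in (-1)..1, ‖w₁ y‖ ≤ 40000 := by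
  obtain ⟨V, g, U, f, α, β, hV, hV_layer, hg, hU, hU_layer, hf, hα, hβ, hw⟩ :=
    h.exists_eqOn_boundaryLayers hk hkL hcase hc
  have hβ_le : ‖β‖ ≤ 1500 := hβ.trans
    (mul_le_of_le_one_right (by norm_num) (Real.exp_le_one_iff.2 (by linarith)))
  have hV_int := hV_layer.integral_norm_le hV hg
  have hU_int := hU_layer.integral_norm_le hU hf
  have hreflect : Continuous (OrrSommerfeld.reflect U) :=
    (continuous_conj.comp (hU.comp continuous_neg)).neg
  calc ∫ y in (-1)..1, ‖w₁ y‖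
      ≤ ∫ y in (-1)..1, (‖α‖ * ‖V y‖ + ‖β‖ * ‖OrrSommerfeld.reflect U y‖) := by
        refine intervalIntegral.integral_mono_on (by norm_num)
          (h.airySolution₁.continuous.norm.intervalIntegrable _ _)
          (Continuous.intervalIntegrable (by fun_prop) _ _) fun y hy ↦ ?_
        rw [hw hy, ← norm_mul, ← norm_mul]
        exact norm_add_le _ _
    _ = ‖α‖ * (∫ y in (-1)..1, ‖V y‖) + ‖β‖ * ∫ y in (-1)..1, ‖U y‖ := by
        rw [intervalIntegral.integral_add (Continuous.intervalIntegrable (by fun_prop) _ _)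
          (Continuous.intervalIntegrable (by fun_prop) _ _), intervalIntegral.integral_const_mul,
          intervalIntegral.integral_const_mul, integral_norm_reflect]
    _ ≤ 70 * 25 + 1500 * 25 := by
        gcongr
        all_goals exact intervalIntegral.integral_nonneg (by norm_num) fun _ _ ↦ norm_nonneg _
    _ ≤ 40000 := by norm_num

theorem norm_le (h : MomentPair L c lam k w₁ v₁ w₂ v₂) (hk : 1 ≤ k) (hkL : k ≤ L)
    (hcase : 6 * k ≤ L ∨ 8 ≤ k) (hc : c ∈ Icc (-1 / 100) 1) {y : ℝ} (hy : y ∈ Icc (-1 : ℝ) 1) :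
    ‖w₁ y‖ ≤ 40000 * √(L ^ 3 / k + L ^ 3 * |1 - lam|) := by
  obtain ⟨V, g, U, f, α, β, -, hV_layer, hg, -, hU_layer, hf, hα, hβ, hw⟩ :=
    h.exists_eqOn_boundaryLayers hk hkL hcase hc
  have hL : 0 ≤ L := by linarith
  have hy_neg := neg_mem_Icc_neg_one_one hy
  have hfar := exp_mul_mul_sqrt_le (lam := lam) hk hkL hy
  set T := √(L ^ 3 / k + L ^ 3 * |1 - lam|)
  have hV_le : ‖V y‖ ≤ 5 * (3 * T) := by
    have hnear := mul_sqrt_mul_exp_le (lam := lam) (by linarith) hkL hy.2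
    exact (hV_layer.norm_le_exp hL hg hy).trans (by linarith)
  have hU_le : ‖OrrSommerfeld.reflect U y‖ ≤ 5 * (L * √(1 + L * |y - lam|)) := by
    rw [norm_reflect]
    refine (hU_layer.norm_le_exp hL hf hy_neg).trans ?_
    rw [show -y - -lam = -(y - lam) by ring, abs_neg]
    refine mul_le_mul_of_nonneg_left (mul_le_of_le_one_right (by positivity)
      (Real.exp_le_one_iff.2 (neg_nonpos.2 ?_))) (by norm_num)
    exact mul_nonneg (by positivity) (sub_nonneg.2 hy_neg.2)
  calc ‖w₁ y‖ ≤ ‖α‖ * ‖V y‖ + ‖β‖ * ‖OrrSommerfeld.reflect U y‖ := by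
        rw [hw hy, ← norm_mul, ← norm_mul]
        exact norm_add_le _ _
    _ ≤ 70 * (5 * (3 * T)) +
          1500 * Real.exp (-(2 / 5 * k)) * (5 * (L * √(1 + L * |y - lam|))) := by gcongr
    _ = 1050 * T + 7500 * (Real.exp (-(2 / 5 * k)) * (L * √(1 + L * |y - lam|))) := by ring
    _ ≤ 1050 * T + 7500 * (2 * T) := by gcongr
    _ ≤ 40000 * T := by linarith [Real.sqrt_nonneg (L ^ 3 / k + L ^ 3 * |1 - lam|)]

theorem integral_norm_le₂ (h : MomentPair L c lam k w₁ v₁ w₂ v₂) (hk : 1 ≤ k)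
    (hkL : k ≤ L) (hcase : 6 * k ≤ L ∨ 8 ≤ k) (hc : c ∈ Icc (-1 / 100) 1) :
    ∫ y in (-1)..1, ‖w₂ y‖ ≤ 40000 :=
  integral_norm_reflect w₂ ▸ h.reflect.integral_norm_le hk hkL hcase hc

theorem norm_le₂ (h : MomentPair L c lam k w₁ v₁ w₂ v₂) (hk : 1 ≤ k) (hkL : k ≤ L)
    (hcase : 6 * k ≤ L ∨ 8 ≤ k) (hc : c ∈ Icc (-1 / 100) 1) {y : ℝ} (hy : y ∈ Icc (-1 : ℝ) 1) :
    ‖w₂ y‖ ≤ 40000 * √(L ^ 3 / k + L ^ 3 * |1 + lam|) := by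
  simpa only [norm_reflect, neg_neg, sub_neg_eq_add] using
    h.reflect.norm_le hk hkL hcase hc (neg_mem_Icc_neg_one_one hy)

end MomentPair

end MomentPair

section HomogeneousSolution

/-- A stream function `φ` with vorticity `w = φ'' - k² φ`, solving the homogeneous Orr–Sommerfeld
equation on `[-1, 1]` with spectral shift `δ`, zero Dirichlet data and real Neumann data
`φ' (-1) = p`, `φ' 1 = q`. -/
structure HomogeneousSolution (ν k lam δ p q : ℝ) (φ w : ℝ → ℂ) : Prop where
  contDiff : ContDiff ℝ 4 φ
  apply_neg_one : φ (-1) = 0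
  apply_one : φ 1 = 0
  deriv_neg_one : deriv φ (-1) = p
  deriv_one : deriv φ 1 = q
  vorticity_eq : w = fun y ↦ deriv (deriv φ) y - (k : ℂ) ^ 2 * φ y
  equation : ∀ y ∈ Icc (-1 : ℝ) 1, -(ν : ℂ) * (deriv (deriv w) y - (k : ℂ) ^ 2 * w y) +
    I * k * (y - lam) * w y - δ * w y = 0

namespace HomogeneousSolution

variable {ν k lam δ p q L c : ℝ} {φ w φ₁ φ₂ w₁ w₂ : ℝ → ℂ}

theorem star (h : HomogeneousSolution ν k lam δ p q φ w) :
    HomogeneousSolution ν (-k) lam δ p q (fun y ↦ star (φ y)) (fun y ↦ star (w y)) where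
  contDiff := conjCLE.contDiff.comp h.contDiff
  apply_neg_one := by rw [h.apply_neg_one, star_zero]
  apply_one := by rw [h.apply_one, star_zero]
  deriv_neg_one := by rw [deriv.star, h.deriv_neg_one, star_def, conj_ofReal]
  deriv_one := by rw [deriv.star, h.deriv_one, star_def, conj_ofReal]
  vorticity_eq := by
    simp only [deriv.star', h.vorticity_eq]
    simp
  equation y hy := by
    have hconj := congrArg conj (h.equation y hy)
    simp only [map_add, map_sub, map_mul, map_neg, map_pow, conj_ofReal, conj_I, map_zero] at hconj
    simp only [deriv.star']
    simp only [star_def, ofReal_neg]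
    linear_combination hconj

theorem exists_abs (h₁ : HomogeneousSolution ν k lam δ 0 1 φ₁ w₁)
    (h₂ : HomogeneousSolution ν k lam δ 1 0 φ₂ w₂) :
    ∃ φ₁' w₁' φ₂' w₂', HomogeneousSolution ν |k| lam δ 0 1 φ₁' w₁' ∧
      HomogeneousSolution ν |k| lam δ 1 0 φ₂' w₂' ∧
      (∀ y, ‖w₁' y‖ = ‖w₁ y‖) ∧ ∀ y, ‖w₂' y‖ = ‖w₂ y‖ := by
  rcases abs_choice k with hk | hk <;> rw [hk]
  · exact ⟨_, _, _, _, h₁, h₂, fun _ ↦ rfl, fun _ ↦ rfl⟩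
  · exact ⟨_, _, _, _, h₁.star, h₂.star, fun _ ↦ norm_star _, fun _ ↦ norm_star _⟩

theorem hasDerivAt_deriv (h : HomogeneousSolution ν k lam δ p q φ w) (y : ℝ) :
    HasDerivAt (deriv φ) (w y + (k : ℂ) ^ 2 * φ y) y := by
  have hφ' : ContDiff ℝ 3 (deriv φ) := ContDiff.iterate_deriv' 3 1 h.contDiff
  refine (hφ'.differentiable (by norm_num) y).hasDerivAt.congr_deriv ?_
  rw [h.vorticity_eq, sub_add_cancel]

theorem contDiff_vorticity (h : HomogeneousSolution ν k lam δ p q φ w) : ContDiff ℝ 2 w := by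
  rw [h.vorticity_eq]
  exact (ContDiff.iterate_deriv' 2 2 h.contDiff).sub
    (contDiff_const.mul (h.contDiff.of_le (by norm_num)))

theorem airySolution (h : HomogeneousSolution ν k lam δ p q φ w) (hν : ν ≠ 0)
    (hk : L ^ 3 * ν = k) (hc : ν * (L ^ 2 * c) = ν * k ^ 2 - δ) :
    AirySolution L c lam w (deriv w) where
  continuous := h.contDiff_vorticity.continuous
  hasDerivAt y _ := (h.contDiff_vorticity.differentiable (by norm_num) y).hasDerivAt
  hasDerivAt_deriv y hy := by
    have hw' : ContDiff ℝ 1 (deriv w) := ContDiff.iterate_deriv' 1 1 h.contDiff_vorticity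
    have hkℂ : (L : ℂ) ^ 3 * ν = k := by exact_mod_cast hk
    have hcℂ : (ν : ℂ) * (L ^ 2 * c) = ν * k ^ 2 - δ := by exact_mod_cast hc
    refine (hw'.differentiable (by norm_num) y).hasDerivAt.congr_deriv
      (mul_left_cancel₀ (ofReal_ne_zero.2 hν) ?_)
    linear_combination -h.equation y hy - w y * hcℂ - I * (y - lam) * w y * hkℂ

theorem expMoment_eq (h : HomogeneousSolution ν k lam δ p q φ w) {a : ℝ} (ha : a ^ 2 = k ^ 2) :
    expMoment a w = Real.exp (a - |a|) * q - Real.exp (-a - |a|) * p := by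
  have haℂ : (a : ℂ) ^ 2 = k ^ 2 := by exact_mod_cast ha
  rw [expMoment_vorticity (fun y _ ↦ (h.contDiff.differentiable (by norm_num) y).hasDerivAt)
    (fun y _ ↦ haℂ ▸ h.hasDerivAt_deriv y) h.contDiff_vorticity.continuous.continuousOn
    h.apply_neg_one h.apply_one, h.deriv_one, h.deriv_neg_one]

theorem momentPair (h₁ : HomogeneousSolution ν k lam δ 0 1 φ₁ w₁)
    (h₂ : HomogeneousSolution ν k lam δ 1 0 φ₂ w₂) (hν : ν ≠ 0) (hk₀ : 0 ≤ k)
    (hk : L ^ 3 * ν = k) (hc : ν * (L ^ 2 * c) = ν * k ^ 2 - δ) :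
    MomentPair L c lam k w₁ (deriv w₁) w₂ (deriv w₂) := by
  have hsum : -k - k = -(2 * k) := by ring
  constructor
  · exact h₁.airySolution hν hk hc
  · exact h₂.airySolution hν hk hc
  · simp [h₁.expMoment_eq rfl, abs_of_nonneg hk₀]
  · simp [h₁.expMoment_eq (neg_sq k), abs_of_nonneg hk₀, hsum]
  · simp [h₂.expMoment_eq rfl, abs_of_nonneg hk₀, hsum]
  · simp [h₂.expMoment_eq (neg_sq k), abs_of_nonneg hk₀]

end HomogeneousSolution

end HomogeneousSolution

section Scaling

variable {ν K L ε : ℝ}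

theorem rpow_div_one_third_pow_three_mul (hν : 0 < ν) (hK : 0 ≤ K) :
    ((K / ν) ^ ((1 : ℝ) / 3)) ^ 3 * ν = K := by
  rw [← Real.rpow_natCast, ← Real.rpow_mul (by positivity)]
  norm_num
  field_simp

theorem rpow_one_third_mul_rpow_two_thirds (hν : 0 < ν) (hL : 0 ≤ L) (hLK : L ^ 3 * ν = K) :
    ν ^ ((1 : ℝ) / 3) * K ^ ((2 : ℝ) / 3) = ν * L ^ 2 := by
  rw [← hLK, Real.mul_rpow (by positivity) hν.le, ← Real.rpow_natCast L 3, ← Real.rpow_mul hL,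
    mul_left_comm, ← Real.rpow_add hν]
  norm_num
  ring

theorem sq_div_sq_sub_mem_Icc (hK : 0 ≤ K) (hKL : K ≤ L) (hε₀ : 0 ≤ ε) (hε : ε ≤ 1 / 100) :
    K ^ 2 / L ^ 2 - ε ∈ Icc (-1 / 100) 1 := by
  have hle : K ^ 2 / L ^ 2 ≤ 1 := div_le_one_of_le₀ (by gcongr) (by positivity)
  have hnonneg : 0 ≤ K ^ 2 / L ^ 2 := by positivity
  constructor <;> linarith

theorem sqrt_div_add_mul {d : ℝ} (hν : 0 < ν) (hK : 0 < K) (hd : 0 ≤ d) (hLK : L ^ 3 * ν = K) :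
    √(L ^ 3 / K + L ^ 3 * d) = ν ^ (-(1 : ℝ) / 2) * (1 + K * d) ^ ((1 : ℝ) / 2) := by
  have hfactor : L ^ 3 / K + L ^ 3 * d = ν⁻¹ * (1 + K * d) := by
    rw [eq_div_of_mul_eq hν.ne' hLK]
    field_simp
  rw [hfactor, Real.sqrt_mul (by positivity), Real.sqrt_eq_rpow, Real.sqrt_eq_rpow,
    ← Real.rpow_neg_one, ← Real.rpow_mul hν.le]
  norm_num

end Scaling

theorem nL1_eq_integral (w : ℝ → ℂ) : nL1 w = ∫ y in (-1)..1, ‖w y‖ := by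
  rw [nL1, intervalIntegral.integral_of_le (by norm_num),
    MeasureTheory.integral_Icc_eq_integral_Ioc]

theorem nLinf_le {w : ℝ → ℂ} {M : ℝ} (h : ∀ y ∈ Icc (-1 : ℝ) 1, ‖w y‖ ≤ M) : nLinf w ≤ M :=
  have : Nonempty (Icc (-1 : ℝ) 1) := ⟨⟨0, by norm_num⟩⟩
  ciSup_le fun y ↦ h y y.2

end OrrSommerfeld

open OrrSommerfeld in
theorem statement7_general {ν k lam ε L : ℝ} {φ₁ φ₂ w₁ w₂ : ℝ → ℂ} (hν : 0 < ν) (hk : 1 ≤ |k|)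
    (hε₀ : 0 ≤ ε) (hε : ε ≤ 1 / 100) (hL : L = (|k| / ν) ^ ((1 : ℝ) / 3))
    (hcase : L ≥ 6 * |k| ∨ (L ≥ |k| ∧ |k| ≥ 8))
    (h₁ : HomogeneousSolution ν k lam (ε * ν ^ ((1 : ℝ) / 3) * |k| ^ ((2 : ℝ) / 3)) 0 1 φ₁ w₁)
    (h₂ : HomogeneousSolution ν k lam (ε * ν ^ ((1 : ℝ) / 3) * |k| ^ ((2 : ℝ) / 3)) 1 0 φ₂ w₂) :
    nLinf w₁ ≤ 80000 * ν ^ (-(1 : ℝ) / 2) * (1 + |k| * |lam - 1|) ^ ((1 : ℝ) / 2) ∧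
      nLinf w₂ ≤ 80000 * ν ^ (-(1 : ℝ) / 2) * (1 + |k| * |lam + 1|) ^ ((1 : ℝ) / 2) ∧
      nL1 w₁ + nL1 w₂ ≤ 80000 := by
  have hk₀ : 0 < |k| := by linarith
  have hkL : |k| ≤ L := hcase.elim (fun h ↦ by linarith) And.left
  have hcase' : 6 * |k| ≤ L ∨ 8 ≤ |k| := hcase.imp_right And.right
  have hc := sq_div_sq_sub_mem_Icc hk₀.le hkL hε₀ hε
  have hLk : L ^ 3 * ν = |k| := hL ▸ rpow_div_one_third_pow_three_mul hν hk₀.le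
  have hδ := rpow_one_third_mul_rpow_two_thirds hν (hk₀.le.trans hkL) hLk
  obtain ⟨_, _, _, _, h₁, h₂, hw₁, hw₂⟩ := h₁.exists_abs h₂
  have hpair := h₁.momentPair h₂ (c := |k| ^ 2 / L ^ 2 - ε) hν.ne' hk₀.le hLk (by
    have : L ≠ 0 := by linarith
    rw [mul_assoc ε, hδ]
    field_simp)
  refine ⟨nLinf_le fun y hy ↦ ?_, nLinf_le fun y hy ↦ ?_, ?_⟩
  · have hsup := hpair.norm_le hk hkL hcase' hc hy
    rw [hw₁, sqrt_div_add_mul hν hk₀ (abs_nonneg _) hLk, abs_sub_comm, ← mul_assoc] at hsup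
    exact hsup.trans (by gcongr; norm_num)
  · have hsup := hpair.norm_le₂ hk hkL hcase' hc hy
    rw [hw₂, sqrt_div_add_mul hν hk₀ (abs_nonneg _) hLk, add_comm 1 lam, ← mul_assoc] at hsup
    exact hsup.trans (by gcongr; norm_num)
  · have hint₁ := hpair.integral_norm_le hk hkL hcase' hc
    have hint₂ := hpair.integral_norm_le₂ hk hkL hcase' hc
    simp only [hw₁, hw₂] at hint₁ hint₂
    rw [nL1_eq_integral, nL1_eq_integral]
    linarith

/-- `L^∞` and `L¹` bounds on the vorticities `w₁, w₂` of the solutions of the homogeneous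
Orr–Sommerfeld equation. -/
theorem statement7 :
    ∃ k₀ δ₀ C : ℝ, 1 ≤ k₀ ∧ 0 < δ₀ ∧ 0 < C ∧
      ∀ (ν : ℝ) (k : ℤ) (lam ε L : ℝ) (φ₁ φ₂ w₁ w₂ : ℝ → ℂ),
        0 < ν → ν ≤ 1 → 1 ≤ |k| → 0 ≤ ε → ε < δ₀ →
        L = (|(k:ℝ)| / ν) ^ ((1:ℝ)/3) →
        (L ≥ 6 * |(k:ℝ)| ∨ (L ≥ |(k:ℝ)| ∧ |(k:ℝ)| ≥ k₀)) →
        ContDiff ℝ 4 φ₁ → ContDiff ℝ 4 φ₂ →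
        φ₁ (-1) = 0 → φ₁ 1 = 0 → deriv φ₁ 1 = 1 → deriv φ₁ (-1) = 0 →
        φ₂ (-1) = 0 → φ₂ 1 = 0 → deriv φ₂ (-1) = 1 → deriv φ₂ 1 = 0 →
        (w₁ = fun y : ℝ => deriv (deriv φ₁) y - (k:ℂ)^2 * φ₁ y) →
        (w₂ = fun y : ℝ => deriv (deriv φ₂) y - (k:ℂ)^2 * φ₂ y) →
        (∀ y ∈ Set.Icc (-1:ℝ) 1,
          -(ν : ℂ) * (deriv (deriv w₁) y - (k:ℂ)^2 * w₁ y)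
            + Complex.I * (k:ℂ) * ((y:ℂ) - (lam:ℂ)) * w₁ y
            - ((ε * ν ^ ((1:ℝ)/3) * |(k:ℝ)| ^ ((2:ℝ)/3) : ℝ) : ℂ) * w₁ y = 0) →
        (∀ y ∈ Set.Icc (-1:ℝ) 1,
          -(ν : ℂ) * (deriv (deriv w₂) y - (k:ℂ)^2 * w₂ y)
            + Complex.I * (k:ℂ) * ((y:ℂ) - (lam:ℂ)) * w₂ y
            - ((ε * ν ^ ((1:ℝ)/3) * |(k:ℝ)| ^ ((2:ℝ)/3) : ℝ) : ℂ) * w₂ y = 0) →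
        nLinf w₁ ≤ C * ν ^ (-(1:ℝ)/2) * (1 + |(k:ℝ)| * |lam - 1|) ^ ((1:ℝ)/2)
          ∧ nLinf w₂ ≤ C * ν ^ (-(1:ℝ)/2) * (1 + |(k:ℝ)| * |lam + 1|) ^ ((1:ℝ)/2)
          ∧ nL1 w₁ + nL1 w₂ ≤ C := by
  refine ⟨8, 1 / 100, 80000, by norm_num, by norm_num, by norm_num, ?_⟩
  intro ν k lam ε L φ₁ φ₂ w₁ w₂ hν _ hk hε₀ hε hL hcase hφ₁ hφ₂ hφ₁_neg hφ₁_one hdφ₁_one hdφ₁_neg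
    hφ₂_neg hφ₂_one hdφ₂_neg hdφ₂_one hw₁ hw₂ heq₁ heq₂
  exact statement7_general hν (by exact_mod_cast hk) hε₀ hε.le hL hcase
    ⟨hφ₁, hφ₁_neg, hφ₁_one, by simpa using hdφ₁_neg, by simpa using hdφ₁_one, by simpa using hw₁,
      by simpa only [Complex.ofReal_intCast] using heq₁⟩
    ⟨hφ₂, hφ₂_neg, hφ₂_one, by simpa using hdφ₂_neg, by simpa using hdφ₂_one, by simpa using hw₂,
      by simpa only [Complex.ofReal_intCast] using heq₂⟩
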